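/- arXiv:1402.7242 — 8 statements merged into one kernel-verified Lean document; each statement's English description precedes it below -/
import Mathlib

section
/- Let G_{n,d} be the configuration-model random d-regular multigraph on n vertices. Suppose d ≥ 12 and 3.5 < k ≤ (1 − 1/√2) d, and set C_{k,d} = e^{−4} (2k/d)^{1 + 1/(k−1)}. Then with high probability as n → ∞, every vertex subset of G_{n,d} of size at most C_{k,d} · n induces a k-sparse subgraph; moreover the probability that this property fails is O_{k,d}(n^{3.5 − k}). -/
/-!
The configuration model; `k`-sparseness of induced sub-multigraphs.
-/

open scoped Classical

noncomputable section

/-- The set of pairings (perfect matchings of the `n*d` half-edges) in the configuration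
model for a `d`-regular multigraph on `n` vertices. -/
def pairings (n d : ℕ) : Finset ((Fin n × Fin d) ≃ (Fin n × Fin d)) :=
  Finset.univ.filter fun M => (∀ x, M (M x) = x) ∧ ∀ x, M x ≠ x

/-- The probability, under the uniform distribution on pairings of the configuration model,
of the event `P`. -/
def configProb (n d : ℕ) (P : ((Fin n × Fin d) ≃ (Fin n × Fin d)) → Prop) : ℝ :=
  (((pairings n d).filter P).card : ℝ) / ((pairings n d).card : ℝ)

/-- The number of edges (loops and parallel edges counted) of the sub-multigraph induced on
`S` by the configuration-model multigraph of the pairing `M`: half the number of half-edges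
whose own vertex and whose partner's vertex both lie in `S`. -/
def edgesWithin {n d : ℕ} (M : (Fin n × Fin d) ≃ (Fin n × Fin d)) (S : Finset (Fin n)) : ℕ :=
  (Finset.univ.filter fun h : Fin n × Fin d => h.1 ∈ S ∧ (M h).1 ∈ S).card / 2

/-- Fixed-point-free involutions of a finite type. -/
def fpf (α : Type*) [Fintype α] : Finset (α ≃ α) :=
  Finset.univ.filter fun M => (∀ x, M (M x) = x) ∧ ∀ x, M x ≠ x

theorem fpf_step {α : Type*} [Fintype α] (T : Finset α) (f : α → α) (a : α) (b : α)
    (hf : ∀ t ∈ T, f t ≠ a) (ha : a ∉ T) (m : ℕ) (hm : T.card + 1 ≤ m) :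
    ((fpf α).filter fun M => ∀ t ∈ insert a T, M t = if t = a then b else f t).card
      * (Fintype.card α - 2 * m)
      ≤ ((fpf α).filter fun M => ∀ t ∈ T, M t = f t).card := by
  set X := (fpf α).filter fun M => ∀ t ∈ insert a T, M t = if t = a then b else f t with hX
  set Y := (fpf α).filter fun M => ∀ t ∈ T, M t = f t with hY
  have hXm : ∀ M ∈ X, (∀ x, M (M x) = x) ∧ (∀ x, M x ≠ x) ∧ M a = b ∧ ∀ t ∈ T, M t = f t := by
    intro M hM
    simp only [hX, fpf, Finset.mem_filter, Finset.mem_univ, true_and] at hM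
    refine ⟨hM.1.1, hM.1.2, ?_, ?_⟩
    · simpa using hM.2 a (by simp)
    · intro t ht
      have := hM.2 t (by simp [ht])
      rwa [if_neg (fun h : t = a => ha (h ▸ ht))] at this
  rcases X.eq_empty_or_nonempty with h0 | ⟨M0, hM0⟩
  · rw [h0]; simp
  set U := insert a (T ∪ T.image f) with hU
  have hUc : U.card ≤ 2 * m := by
    rw [hU]
    have h1 := Finset.card_insert_le a (T ∪ T.image f)
    have h2 := Finset.card_union_le T (T.image f)
    have h3 : (T.image f).card ≤ T.card := Finset.card_image_le
    omega
  have hbU : b ∉ U := by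
    obtain ⟨i, j, e, g⟩ := hXm M0 hM0
    simp only [hU, Finset.mem_insert, Finset.mem_union, Finset.mem_image, not_or, not_exists, not_and]
    refine ⟨?_, ?_, ?_⟩
    · rw [← e]; exact j a
    · intro hb
      have h1 := g b hb
      have : M0 b = a := by rw [← e, i]
      exact hf b hb (by rw [← h1, this])
    · intro t ht htb
      have h1 := g t ht
      rw [htb, ← e] at h1
      exact ha (M0.injective h1 ▸ ht)
  have hle : Fintype.card α - 2 * m ≤ (Finset.univ \ U).card := by
    rw [Finset.card_sdiff_of_subset (Finset.subset_univ _), Finset.card_univ]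
    omega
  calc X.card * (Fintype.card α - 2 * m) ≤ X.card * (Finset.univ \ U).card :=
        Nat.mul_le_mul_left _ hle
    _ = (X ×ˢ (Finset.univ \ U)).card := (Finset.card_product _ _).symm
    _ ≤ Y.card := by
      apply Finset.card_le_card_of_injOn
        (fun p => (Equiv.swap b p.2).trans (p.1.trans (Equiv.swap b p.2)))
      · rintro ⟨M, c⟩ hp
        simp only [Finset.coe_product, Set.mem_prod, Finset.mem_coe, Finset.mem_sdiff,
          Finset.mem_univ, true_and] at hp
        obtain ⟨hM, hc⟩ := hp
        obtain ⟨i, j, e, g⟩ := hXm M hM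
        simp only [hY, fpf, Finset.coe_filter, Finset.mem_filter, Finset.mem_univ, true_and,
          Set.mem_ofPred_eq, Equiv.trans_apply]
        refine ⟨⟨?_, ?_⟩, ?_⟩
        · intro x; simp [i]
        · intro x hx
          apply j (Equiv.swap b c x)
          apply (Equiv.swap b c).injective
          simpa using hx
        · intro t ht
          have hne : ∀ z ∈ U, Equiv.swap b c z = z := fun z hz =>
            Equiv.swap_apply_of_ne_of_ne (fun h => hbU (h ▸ hz)) (fun h => hc (h ▸ hz))
          rw [hne t (by simp [hU, ht]), g t ht, hne (f t)]
          simp only [hU, Finset.mem_insert, Finset.mem_union, Finset.mem_image]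
          exact Or.inr (Or.inr ⟨t, ht, rfl⟩)
      · rintro ⟨M, c⟩ hp ⟨M2, c2⟩ hp2 heq
        simp only [Finset.coe_product, Set.mem_prod, Finset.mem_coe, Finset.mem_sdiff,
          Finset.mem_univ, true_and] at hp hp2
        have haU : a ∈ U := by simp [hU]
        have key : ∀ M ∈ X, ∀ c, c ∉ U →
            ((Equiv.swap b c).trans (M.trans (Equiv.swap b c))) a = c := by
          intro M hM c hc
          obtain ⟨i, j, e, g⟩ := hXm M hM
          have : Equiv.swap b c a = a :=
            Equiv.swap_apply_of_ne_of_ne (fun h => hbU (h ▸ haU)) (fun h => hc (h ▸ haU))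
          simp [this, e]
        have hcc : c = c2 := by
          rw [← key M hp.1 c hp.2, ← key M2 hp2.1 c2 hp2.2]
          exact DFunLike.congr_fun heq a
        subst hcc
        have : M = M2 := by
          ext x
          have := DFunLike.congr_fun heq (Equiv.swap b c x)
          simpa using this
        rw [this]

theorem fpf_constraint {α : Type*} [Fintype α] (m : ℕ) (f : α → α) (T : Finset α) :
    (∀ t ∈ T, f t ∉ T) → T.card ≤ m →
    ((fpf α).filter fun M => ∀ t ∈ T, M t = f t).card * (Fintype.card α - 2 * m) ^ T.card
      ≤ (fpf α).card := by
  induction T using Finset.induction_on with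
  | empty => intro _ _; simp
  | insert a T ha ih =>
    intro h1 h2
    rw [Finset.card_insert_of_notMem ha] at h2 ⊢
    have hs := fpf_step T f a (f a) (fun t ht h => h1 t (by simp [ht]) (by simp [h])) ha m h2
    have he : ((fpf α).filter fun M => ∀ t ∈ insert a T, M t = if t = a then f a else f t)
        = ((fpf α).filter fun M => ∀ t ∈ insert a T, M t = f t) := by
      apply Finset.filter_congr
      intro M _
      refine forall₂_congr fun t _ => ?_
      split_ifs with h
      · rw [h]
      · rfl
    rw [he] at hs
    have := ih (fun t ht h => h1 t (by simp [ht]) (by simp [h])) (by omega)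
    calc _ = (((fpf α).filter fun M => ∀ t ∈ insert a T, M t = f t).card
          * (Fintype.card α - 2 * m)) * (Fintype.card α - 2 * m) ^ T.card := by ring
      _ ≤ _ := le_trans (Nat.mul_le_mul_right _ hs) this

theorem fpf_target {α : Type*} [Fintype α] (A T : Finset α) :
    ((fpf α).filter fun M => ∀ t ∈ T, M t ∈ A ∧ M t ∉ T).card
      * (Fintype.card α - 2 * T.card) ^ T.card ≤ A.card ^ T.card * (fpf α).card := by
  set Z := (fpf α).filter fun M => ∀ t ∈ T, M t ∈ A ∧ M t ∉ T with hZ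
  have hmaps : ∀ M ∈ Z, (fun t : T => M t) ∈ Fintype.piFinset (fun _ : T => A) := by
    intro M hM
    simp only [hZ, Finset.mem_filter] at hM
    simp only [Fintype.mem_piFinset]
    exact fun t => (hM.2 t t.2).1
  rw [Finset.card_eq_sum_card_fiberwise hmaps, Finset.sum_mul]
  have hc : (Fintype.piFinset (fun _ : T => A)).card = A.card ^ T.card := by
    simp
  rw [← hc, ← smul_eq_mul (Finset.card _)]
  apply Finset.sum_le_card_nsmul
  intro g _
  rcases (Z.filter fun M => (fun t : T => M t) = g).eq_empty_or_nonempty with h0 | ⟨M0, hM0⟩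
  · rw [h0]; simp
  · simp only [hZ, Finset.mem_filter] at hM0
    refine le_trans (Nat.mul_le_mul_right _ ?_)
      (fpf_constraint T.card (fun x => M0 x) T (fun t ht => (hM0.1.2 t ht).2) le_rfl)
    apply Finset.card_le_card
    intro M hM
    simp only [hZ, Finset.mem_filter] at hM ⊢
    refine ⟨hM.1.1, fun t ht => ?_⟩
    exact congrFun (hM.2.trans hM0.2.symm) ⟨t, ht⟩

theorem fpf_edges {α : Type*} [Fintype α] (A : Finset α) (m : ℕ) :
    ((fpf α).filter fun M => 2 * m ≤ (Finset.univ.filter fun h => h ∈ A ∧ M h ∈ A).card).card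
      * (Fintype.card α - 2 * m) ^ m ≤ A.card.choose m * (A.card ^ m * (fpf α).card) := by
  have hsub : ((fpf α).filter fun M =>
      2 * m ≤ (Finset.univ.filter fun h => h ∈ A ∧ M h ∈ A).card) ⊆
      (A.powersetCard m).biUnion fun T => (fpf α).filter fun M => ∀ t ∈ T, M t ∈ A ∧ M t ∉ T := by
    intro M hM
    simp only [Finset.mem_filter] at hM
    obtain ⟨hM, hc⟩ := hM
    have hM2 := hM
    simp only [fpf, Finset.mem_filter, Finset.mem_univ, true_and] at hM2
    obtain ⟨i, j⟩ := hM2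
    set H := Finset.univ.filter fun h => h ∈ A ∧ M h ∈ A with hH
    let e := Fintype.equivFin α
    set T1 := H.filter fun h => e h < e (M h) with hT1
    have hHu : H ⊆ T1 ∪ T1.image M := by
      intro h hh
      have hh2 := hh
      simp only [hH, Finset.mem_filter, Finset.mem_univ, true_and] at hh2
      rw [Finset.mem_union, Finset.mem_image]
      rcases lt_trichotomy (e h) (e (M h)) with h1 | h1 | h1
      · left; simp only [hT1, Finset.mem_filter]; exact ⟨hh, h1⟩
      · exact absurd (e.injective h1).symm (j h)
      · right
        refine ⟨M h, ?_, i h⟩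
        simp only [hT1, hH, Finset.mem_filter, Finset.mem_univ, true_and, i]
        exact ⟨⟨hh2.2, hh2.1⟩, h1⟩
    have hc2 : m ≤ T1.card := by
      have h1 := Finset.card_le_card hHu
      have h2 := Finset.card_union_le T1 (T1.image M)
      have h3 : (T1.image M).card ≤ T1.card := Finset.card_image_le
      omega
    obtain ⟨T, hT, hTc⟩ := Finset.exists_subset_card_eq hc2
    simp only [Finset.mem_biUnion, Finset.mem_powersetCard, Finset.mem_filter]
    have hm : ∀ t ∈ T, (t ∈ A ∧ M t ∈ A) ∧ e t < e (M t) := by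
      intro t ht
      have := hT ht
      simpa only [hT1, hH, Finset.mem_filter, Finset.mem_univ, true_and] using this
    refine ⟨T, ⟨fun t ht => (hm t ht).1.1, hTc⟩, hM, fun t ht => ⟨(hm t ht).1.2, fun h => ?_⟩⟩
    have h1 := (hm t ht).2
    have h2 := (hm _ h).2
    rw [i] at h2
    exact absurd h1 (not_lt.mpr h2.le)
  refine le_trans (Nat.mul_le_mul_right _ ((Finset.card_le_card hsub).trans
    Finset.card_biUnion_le)) ?_
  rw [Finset.sum_mul, ← Finset.card_powersetCard, ← smul_eq_mul (Finset.card _)]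
  apply Finset.sum_le_card_nsmul
  intro T hT
  have := (Finset.mem_powersetCard.mp hT).2
  have h := fpf_target A T
  rwa [this] at h

theorem fpf_nonempty {α : Type*} [Fintype α] (h : Even (Fintype.card α)) : (fpf α).Nonempty := by
  obtain ⟨r, hr⟩ := h
  have e : α ≃ Fin r × Bool := Fintype.equivOfCardEq (by simp [hr]; ring)
  let N : Fin r × Bool ≃ Fin r × Bool :=
    ⟨fun p => (p.1, !p.2), fun p => (p.1, !p.2), fun p => by simp, fun p => by simp⟩
  refine ⟨e.trans (N.trans e.symm), ?_⟩
  simp only [fpf, Finset.mem_filter, Finset.mem_univ, true_and, Equiv.trans_apply]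
  refine ⟨fun x => ?_, fun x hx => ?_⟩
  · simp [N]
  · have := congrArg e hx
    simp only [Equiv.apply_symm_apply, N, Equiv.coe_fn_mk] at this
    have := congrArg Prod.snd this
    simp at this

theorem choose_le_exp (N j : ℕ) (hj : 1 ≤ j) :
    (N.choose j : ℝ) ≤ (Real.exp 1 * N / j) ^ j := by
  have h1 : (N.choose j : ℝ) ≤ (N : ℝ) ^ j / (j.factorial : ℝ) := Nat.choose_le_pow_div j N
  have h2 : (j : ℝ) ^ j / (j.factorial : ℝ) ≤ Real.exp j :=
    Real.pow_div_factorial_le_exp (j : ℝ) (by positivity) j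
  have hj0 : (0 : ℝ) < j := by exact_mod_cast hj
  have hf : (0 : ℝ) < j.factorial := by exact_mod_cast j.factorial_pos
  refine h1.trans ?_
  have h3 : Real.exp j = Real.exp 1 ^ j := by rw [← Real.exp_nat_mul]; simp
  rw [h3] at h2
  rw [div_pow, mul_pow]
  rw [div_le_iff₀ hf] at h2
  rw [div_le_div_iff₀ hf (by positivity)]
  have : (0 : ℝ) ≤ (N : ℝ) ^ j := by positivity
  nlinarith [mul_le_mul_of_nonneg_left h2 this]

theorem four_le : (4 : ℝ) * Real.exp 1 ≤ Real.exp (5 / 2) := by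
  have h1 : Real.exp (5 / 2) = Real.exp 1 * Real.exp (3 / 2) := by
    rw [← Real.exp_add]; norm_num
  have h2 : Real.exp (3 / 2) ^ 2 = Real.exp 1 ^ 3 := by
    rw [← Real.exp_nat_mul, ← Real.exp_nat_mul]; norm_num
  have h3 := Real.exp_one_gt_d9
  have h4 : (16 : ℝ) ≤ Real.exp (3 / 2) ^ 2 := by
    rw [h2]
    have : (2.7 : ℝ) ^ 3 ≤ Real.exp 1 ^ 3 := by gcongr; linarith
    norm_num at this ⊢; linarith
  have h5 : (4 : ℝ) ≤ Real.exp (3 / 2) := by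
    nlinarith [Real.exp_pos (3 / 2 : ℝ)]
  rw [h1]
  nlinarith [Real.exp_pos (1 : ℝ)]

theorem C_bounds (u k : ℝ) (hk : 3.5 < k) (hu : 0 < u) (hu1 : u ≤ 1) :
    0 < Real.exp (-4) * u ^ (1 + 1 / (k - 1)) ∧ Real.exp (-4) * u ^ (1 + 1 / (k - 1)) ≤ 1 / 2 ∧
    Real.exp (5 / 2) / u * (Real.exp (-4) * u ^ (1 + 1 / (k - 1))) ≤ 1 ∧
    (Real.exp 1 * (Real.exp (5 / 2) / u) ^ k) *
      (Real.exp (-4) * u ^ (1 + 1 / (k - 1))) ^ (k - 1) ≤ Real.exp (-1 / 4) := by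
  have hk1 : 0 < k - 1 := by norm_num at hk; linarith
  have hp : 0 < 1 / (k - 1) := by positivity
  have hup : u ^ (1 + 1 / (k - 1)) ≤ 1 := Real.rpow_le_one hu.le hu1 (by linarith)
  refine ⟨by positivity, ?_, ?_, ?_⟩
  · have h1 : Real.exp (-4) ≤ 1 / 2 := by
      rw [Real.exp_neg, inv_eq_one_div]
      apply one_div_le_one_div_of_le (by norm_num)
      have := Real.add_one_le_exp (4 : ℝ)
      linarith
    have : 0 < u ^ (1 + 1 / (k - 1)) := by positivity
    nlinarith
  · rw [Real.rpow_add hu, Real.rpow_one]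
    have h2 : u ^ (1 / (k - 1)) ≤ 1 := Real.rpow_le_one hu.le hu1 hp.le
    have h3 : Real.exp (5 / 2) / u * (Real.exp (-4) * (u * u ^ (1 / (k - 1))))
        = (Real.exp (5 / 2) * Real.exp (-4)) * u ^ (1 / (k - 1)) := by field_simp
    rw [h3, ← Real.exp_add]
    have h4 : Real.exp (5 / 2 + -4) ≤ 1 := Real.exp_le_one_iff.mpr (by norm_num)
    exact mul_le_one₀ h4 (by positivity) h2
  · rw [Real.mul_rpow (by positivity) (by positivity), ← Real.rpow_mul hu.le,
      Real.div_rpow (by positivity) hu.le, ← Real.exp_mul, ← Real.exp_mul]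
    have h1 : (1 + 1 / (k - 1)) * (k - 1) = k := by field_simp; ring
    rw [h1]
    have h2 : (0 : ℝ) < u ^ k := by positivity
    have h3 : Real.exp 1 * (Real.exp (5 / 2 * k) / u ^ k) * (Real.exp (-4 * (k - 1)) * u ^ k)
        = Real.exp 1 * Real.exp (5 / 2 * k) * Real.exp (-4 * (k - 1)) := by field_simp
    rw [h3, ← Real.exp_add, ← Real.exp_add]
    apply Real.exp_le_exp.mpr
    norm_num at hk
    linarith

theorem term_bound (d n s m : ℕ) (k C : ℝ) (hd : 12 ≤ d) (hk : 3.5 < k)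
    (hC : C ≤ 1 / 2) (hC0 : 0 < C)
    (hy : Real.exp (5 / 2) / (2 * k / d) * C ≤ 1)
    (hB : (Real.exp 1 * (Real.exp (5 / 2) / (2 * k / d)) ^ k) * C ^ (k - 1) ≤ Real.exp (-1 / 4))
    (hn : 1 ≤ n) (hs : 1 ≤ s) (hsC : (s : ℝ) ≤ C * n) (hm : 2 * m ≤ s * d)
    (hkm : k * s ≤ m) :
    (n.choose s : ℝ) * (((s * d).choose m : ℝ) * ((s * d : ℕ) : ℝ) ^ m
      / ((n * d - 2 * m : ℕ) : ℝ) ^ m)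
    ≤ (n : ℝ) ^ ((3.5 : ℝ) - k) * ((Real.exp 1 * (Real.exp (5 / 2) / (2 * k / d)) ^ k)
        * (Real.exp (-1 / 4))⁻¹ * ((s : ℝ) ^ ⌈k⌉₊ * Real.exp (-1 / 4) ^ s)) := by
  have hk0 : 0 < k := by norm_num at hk; linarith
  have hk1 : 0 < k - 1 := by norm_num at hk; linarith
  have hd0 : (0 : ℝ) < d := by exact_mod_cast (by omega : 0 < d)
  have hn0 : (0 : ℝ) < n := by exact_mod_cast hn
  have hs0 : (0 : ℝ) < s := by exact_mod_cast hs
  have hm0 : (0 : ℝ) < m := lt_of_lt_of_le (by positivity) hkm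
  have hm1 : 1 ≤ m := by exact_mod_cast hm0
  set D := Real.exp (5 / 2) / (2 * k / d) with hD
  have hD0 : 0 < D := by positivity
  set q := Real.exp (-1 / 4) with hq
  have hq0 : 0 < q := Real.exp_pos _
  set x : ℝ := s / n with hx
  have hx0 : 0 < x := by positivity
  have hxC : x ≤ C := by rw [hx, div_le_iff₀ hn0]; exact hsC
  have hsn : 2 * (s : ℝ) ≤ n := by nlinarith
  have hmR : 2 * (m : ℝ) ≤ s * d := by exact_mod_cast hm
  have hsub : ((n * d - 2 * m : ℕ) : ℝ) = n * d - 2 * m := by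
    rw [Nat.cast_sub]
    · push_cast; ring
    · have : (2 * m : ℝ) ≤ n * d := by nlinarith
      exact_mod_cast this
  have hden : (n * d : ℝ) / 2 ≤ ((n * d - 2 * m : ℕ) : ℝ) := by rw [hsub]; nlinarith
  have hnd : (0 : ℝ) < n * d / 2 := by positivity
  have hden0 := lt_of_lt_of_le hnd hden
  -- the edge factor
  have h1 : ((s * d).choose m : ℝ) * ((s * d : ℕ) : ℝ) ^ m / ((n * d - 2 * m : ℕ) : ℝ) ^ m
      ≤ (D * x) ^ m := by
    calc _ ≤ (Real.exp 1 * (s * d : ℕ) / m) ^ m * ((s * d : ℕ) : ℝ) ^ m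
          / ((n * d - 2 * m : ℕ) : ℝ) ^ m := by
          gcongr
          exact choose_le_exp _ _ hm1
      _ = (Real.exp 1 * (s * d : ℕ) / m * ((s * d : ℕ) / ((n * d - 2 * m : ℕ) : ℝ))) ^ m := by
          rw [mul_pow, div_pow ((s * d : ℕ) : ℝ), mul_div_assoc]
      _ ≤ (D * x) ^ m := by
          apply pow_le_pow_left₀ (by positivity)
          calc _ ≤ Real.exp 1 * (s * d : ℕ) / (k * s) * ((s * d : ℕ) / (n * d / 2)) := by gcongr
            _ = (4 * Real.exp 1) / (2 * k / d) * x := by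
                rw [hx]; push_cast; field_simp; norm_num
            _ ≤ D * x := by
                rw [hD]; gcongr; exact four_le
  have hyx : D * x ≤ 1 := le_trans (by gcongr) hy
  have h2 : (D * x) ^ m ≤ ((D * x) ^ k) ^ s := by
    rw [← Real.rpow_natCast (D * x) m, ← Real.rpow_natCast ((D * x) ^ k) s,
      ← Real.rpow_mul (by positivity)]
    exact Real.rpow_le_rpow_of_exponent_ge (by positivity) hyx hkm
  have h3 : (n.choose s : ℝ) ≤ (Real.exp 1 / x) ^ s := by
    have := choose_le_exp n s hs
    convert this using 2
    rw [hx]; field_simp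
  set B := Real.exp 1 * D ^ k with hBd
  have hB0 : 0 < B := by positivity
  have h4 : (Real.exp 1 / x) * (D * x) ^ k = B * x ^ (k - 1) := by
    rw [Real.mul_rpow hD0.le hx0.le, Real.rpow_sub hx0, Real.rpow_one, hBd]
    field_simp
  have h5 : B * x ^ (k - 1) ≤ q := le_trans (by gcongr) hB
  have h6 : x ^ (k - 1) ≤ (n : ℝ) ^ ((3.5 : ℝ) - k) * (s : ℝ) ^ ⌈k⌉₊ := by
    rw [hx, Real.div_rpow hs0.le hn0.le, div_eq_mul_inv, ← Real.rpow_neg hn0.le, mul_comm]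
    have hn1 : (1 : ℝ) ≤ n := by exact_mod_cast hn
    have hs1 : (1 : ℝ) ≤ s := by exact_mod_cast hs
    rw [← Real.rpow_natCast (s : ℝ) ⌈k⌉₊]
    have := Nat.le_ceil k
    gcongr
    · norm_num
    · linarith
  obtain ⟨t, rfl⟩ : ∃ t, s = t + 1 := ⟨s - 1, by omega⟩
  calc _ ≤ (Real.exp 1 / x) ^ (t + 1) * ((D * x) ^ k) ^ (t + 1) := by
        apply mul_le_mul h3 (h1.trans h2) (by positivity) (by positivity)
    _ = (B * x ^ (k - 1)) ^ t * (B * x ^ (k - 1)) := by rw [← mul_pow, h4, pow_succ]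
    _ ≤ q ^ t * (B * ((n : ℝ) ^ ((3.5 : ℝ) - k) * ((t + 1 : ℕ) : ℝ) ^ ⌈k⌉₊)) := by gcongr
    _ = _ := by rw [pow_succ q]; field_simp

theorem fpf_eq (n d : ℕ) : fpf (Fin n × Fin d) = pairings n d := by
  unfold fpf pairings
  congr!

theorem configProb_le (n d : ℕ) (P : ((Fin n × Fin d) ≃ (Fin n × Fin d)) → Prop)
    (X : Finset ((Fin n × Fin d) ≃ (Fin n × Fin d))) (h : ∀ M ∈ pairings n d, P M → M ∈ X) :
    configProb n d P ≤ (X.card : ℝ) / (pairings n d).card := by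
  unfold configProb
  gcongr
  intro M hM
  rw [Finset.mem_filter] at hM
  exact h M hM.1 hM.2

/-- The per-subset bound, as a bound on probabilities. -/
theorem subset_bound (n d : ℕ) (S : Finset (Fin n)) (m : ℕ) (h : 2 * m < n * d) :
    (((pairings n d).filter fun M => m ≤ edgesWithin M S).card : ℝ)
      ≤ (((S.card * d).choose m : ℝ) * ((S.card * d : ℕ) : ℝ) ^ m
      / ((n * d - 2 * m : ℕ) : ℝ) ^ m) * (pairings n d).card := by
  have key := fpf_edges (S ×ˢ (Finset.univ : Finset (Fin d))) m
  have hA : (S ×ˢ (Finset.univ : Finset (Fin d))).card = S.card * d := by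
    simp [Finset.card_product]
  have hcard : Fintype.card (Fin n × Fin d) = n * d := by simp
  rw [hA, hcard] at key
  rw [fpf_eq] at key
  have key2 : ((pairings n d).filter fun M => m ≤ edgesWithin M S).card * (n * d - 2 * m) ^ m ≤
      (S.card * d).choose m * ((S.card * d) ^ m * (pairings n d).card) := by
    refine (Nat.mul_le_mul_right _ (Finset.card_le_card ?_)).trans key
    intro M hM
    rw [Finset.mem_filter] at hM ⊢
    refine ⟨hM.1, ?_⟩
    have h1 := hM.2
    unfold edgesWithin at h1
    have h2 : (Finset.univ.filter fun h : Fin n × Fin d => h.1 ∈ S ∧ (M h).1 ∈ S).card ≤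
      (Finset.univ.filter fun h => h ∈ S ×ˢ (Finset.univ : Finset (Fin d)) ∧
        M h ∈ S ×ˢ (Finset.univ : Finset (Fin d))).card := by
      apply Finset.card_le_card
      intro h hh
      rw [Finset.mem_filter] at hh ⊢
      simpa using hh
    have h3 := (show 2 * m ≤ _ by omega : 2 * m ≤ (Finset.univ.filter fun h : Fin n × Fin d =>
      h.1 ∈ S ∧ (M h).1 ∈ S).card).trans h2
    refine h3.trans (le_of_eq ?_)
    congr!
  have hpos : (0 : ℝ) < ((n * d - 2 * m : ℕ) : ℝ) := by exact_mod_cast (by omega : 0 < n * d - 2 * m)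
  have key3 : (((pairings n d).filter fun M => m ≤ edgesWithin M S).card : ℝ)
      * ((n * d - 2 * m : ℕ) : ℝ) ^ m
      ≤ ((S.card * d).choose m : ℝ) * (((S.card * d : ℕ) : ℝ) ^ m * (pairings n d).card) := by
    exact_mod_cast key2
  rw [div_mul_eq_mul_div, le_div_iff₀ (by positivity)]
  linarith

theorem edges_le (n d : ℕ) (M : (Fin n × Fin d) ≃ (Fin n × Fin d)) (S : Finset (Fin n)) :
    2 * edgesWithin M S ≤ S.card * d := by
  have hA : (S ×ˢ (Finset.univ : Finset (Fin d))).card = S.card * d := by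
    simp [Finset.card_product]
  have : (Finset.univ.filter fun h : Fin n × Fin d => h.1 ∈ S ∧ (M h).1 ∈ S).card
      ≤ S.card * d := by
    rw [← hA]
    apply Finset.card_le_card
    intro h hh
    simp only [Finset.mem_filter, Finset.mem_univ, true_and] at hh
    simp [hh.1]
  unfold edgesWithin
  omega

theorem fail_bound (d : ℕ) (k C : ℝ) (hd : 12 ≤ d) (hk : 3.5 < k)
    (hC : C ≤ 1 / 2) (hC0 : 0 < C)
    (hy : Real.exp (5 / 2) / (2 * k / d) * C ≤ 1)
    (hB : (Real.exp 1 * (Real.exp (5 / 2) / (2 * k / d)) ^ k) * C ^ (k - 1) ≤ Real.exp (-1 / 4)) :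
    ∃ K : ℝ, 0 < K ∧ ∀ n : ℕ,
      configProb n d (fun M => ¬ (∀ S : Finset (Fin n),
          (S.card : ℝ) ≤ C * n → (edgesWithin M S : ℝ) ≤ k * S.card))
        ≤ K * (n : ℝ) ^ ((3.5 : ℝ) - k) := by
  have hk0 : 0 < k := by norm_num at hk; linarith
  have hd0 : (0 : ℝ) < d := by exact_mod_cast (by omega : 0 < d)
  set q := Real.exp (-1 / 4) with hq
  have hq0 : 0 < q := Real.exp_pos _
  have hq1 : q < 1 := by rw [hq, Real.exp_lt_one_iff]; norm_num
  set B := Real.exp 1 * (Real.exp (5 / 2) / (2 * k / d)) ^ k with hBd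
  have hB0 : 0 < B := by positivity
  have hsum : Summable (fun s : ℕ => (s : ℝ) ^ ⌈k⌉₊ * q ^ s) :=
    summable_pow_mul_geometric_of_norm_lt_one _ (by rw [Real.norm_of_nonneg hq0.le]; exact hq1)
  set Sg := ∑' s : ℕ, (s : ℝ) ^ ⌈k⌉₊ * q ^ s with hSg
  have hSnn : 0 ≤ Sg := tsum_nonneg fun s => by positivity
  refine ⟨B * q⁻¹ * Sg + 1, by positivity, fun n => ?_⟩
  rcases Nat.eq_zero_or_pos n with rfl | hn
  · refine (configProb_le 0 d _ ∅ ?_).trans ?_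
    · intro M _ h
      exfalso
      apply h
      intro S _
      have h1 := edges_le 0 d M S
      have h2 : S.card = 0 := by rw [Finset.card_eq_zero]; exact Subsingleton.elim _ _
      rw [h2] at h1 ⊢
      have : edgesWithin M S = 0 := by omega
      simp [this]
    · simp only [Finset.card_empty, Nat.cast_zero, zero_div]
      positivity
  have hn0 : (0 : ℝ) < n := by exact_mod_cast hn
  set Q : ℝ := ((pairings n d).card : ℝ) with hQ
  have hQ0 : 0 ≤ Q := by positivity
  set bad : Finset (Fin n) → Finset ((Fin n × Fin d) ≃ (Fin n × Fin d)) := fun S =>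
    (pairings n d).filter fun M => (S.card : ℝ) ≤ C * n ∧ k * S.card < edgesWithin M S with hbad
  refine (configProb_le n d _ ((Finset.univ : Finset (Finset (Fin n))).biUnion bad) ?_).trans ?_
  · intro M h1 hM
    simp only [not_forall, not_le] at hM
    obtain ⟨S, h2, h3⟩ := hM
    simp only [Finset.mem_biUnion, Finset.mem_univ, true_and, hbad, Finset.mem_filter]
    exact ⟨S, h1, h2, h3⟩
  refine div_le_of_le_mul₀ (by positivity) (by positivity) ?_
  set F : ℕ → ℝ := fun s => (n : ℝ) ^ ((3.5 : ℝ) - k) * (B * q⁻¹ * ((s : ℝ) ^ ⌈k⌉₊ * q ^ s)) with hF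
  have hF0 : ∀ s, 0 ≤ F s := fun s => by positivity
  have hone : ∀ S : Finset (Fin n),
      (n.choose S.card : ℝ) * ((bad S).card : ℝ) ≤ F S.card * Q := by
    intro S
    rcases (bad S).eq_empty_or_nonempty with h0 | ⟨M0, hM0⟩
    · rw [h0]; simp only [Finset.card_empty, Nat.cast_zero, mul_zero]
      exact mul_nonneg (hF0 _) hQ0
    simp only [hbad, Finset.mem_filter] at hM0
    obtain ⟨-, hSC, hlt⟩ := hM0
    set m := ⌈k * S.card⌉₊ with hm
    have hmle : ∀ M : (Fin n × Fin d) ≃ (Fin n × Fin d), k * S.card < edgesWithin M S →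
        m ≤ edgesWithin M S := fun M h => Nat.ceil_le.mpr h.le
    have hed := edges_le n d M0 S
    have hm2 : 2 * m ≤ S.card * d := by have := hmle M0 hlt; omega
    have hs : 1 ≤ S.card := by
      by_contra hcon
      have h00 : S.card = 0 := by omega
      rw [h00] at hed hlt
      have : edgesWithin M0 S = 0 := by omega
      rw [this] at hlt
      simp at hlt
    have hs0 : (0 : ℝ) < S.card := by exact_mod_cast hs
    have hsn : S.card < n := by
      have : (S.card : ℝ) < n := by nlinarith
      exact_mod_cast this
    have hlt2 : 2 * m < n * d := by
      have : S.card * d < n * d := Nat.mul_lt_mul_of_pos_right hsn (by omega)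
      omega
    have hb := subset_bound n d S m hlt2
    have ht := term_bound d n S.card m k C hd hk hC hC0 hy hB hn hs hSC hm2 (Nat.le_ceil _)
    have hsub2 : ((bad S).card : ℝ) ≤
        (((pairings n d).filter fun M => m ≤ edgesWithin M S).card : ℝ) := by
      have : (bad S).card ≤ ((pairings n d).filter fun M => m ≤ edgesWithin M S).card := by
        apply Finset.card_le_card
        intro M hM
        simp only [hbad, Finset.mem_filter] at hM ⊢
        exact ⟨hM.1, hmle M hM.2.2⟩
      exact_mod_cast this
    calc _ ≤ (n.choose S.card : ℝ) * ((((S.card * d).choose m : ℝ) * ((S.card * d : ℕ) : ℝ) ^ m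
      / ((n * d - 2 * m : ℕ) : ℝ) ^ m) * Q) := by gcongr; exact hsub2.trans hb
      _ = _ := (mul_assoc _ _ _).symm
      _ ≤ F S.card * Q := by gcongr
  have honeb : ∀ S : Finset (Fin n),
      ((bad S).card : ℝ) ≤ (F S.card * Q) / (n.choose S.card : ℝ) := by
    intro S
    have hc : (0 : ℝ) < n.choose S.card := by
      have : S.card ≤ n := by simpa using Finset.card_le_univ S
      exact_mod_cast Nat.choose_pos this
    rw [le_div_iff₀ hc, mul_comm]
    exact hone S
  have hcount : (((Finset.univ : Finset (Finset (Fin n))).biUnion bad).card : ℝ)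
      ≤ ∑ S : Finset (Fin n), ((bad S).card : ℝ) := by
    exact_mod_cast Finset.card_biUnion_le
  refine hcount.trans ?_
  calc ∑ S : Finset (Fin n), ((bad S).card : ℝ)
      ≤ ∑ S : Finset (Fin n), (F S.card * Q) / (n.choose S.card : ℝ) :=
        Finset.sum_le_sum fun S _ => honeb S
    _ = ∑ s ∈ Finset.range (n + 1), F s * Q := by
        have := Finset.sum_powerset_apply_card
          (fun s => (F s * Q) / (n.choose s : ℝ)) (x := (Finset.univ : Finset (Fin n)))
        rw [Finset.powerset_univ] at this
        rw [this]
        simp only [Finset.card_univ, Fintype.card_fin, nsmul_eq_mul]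
        apply Finset.sum_congr rfl
        intro s hs
        have hc : (0 : ℝ) < n.choose s := by
          exact_mod_cast Nat.choose_pos (by simpa [Nat.lt_succ_iff] using hs)
        field_simp
    _ = (n : ℝ) ^ ((3.5 : ℝ) - k) * (B * q⁻¹ *
          ∑ s ∈ Finset.range (n + 1), ((s : ℝ) ^ ⌈k⌉₊ * q ^ s)) * Q := by
        rw [← Finset.sum_mul, hF, ← Finset.mul_sum, ← Finset.mul_sum]
    _ ≤ (n : ℝ) ^ ((3.5 : ℝ) - k) * (B * q⁻¹ * Sg) * Q := by
        gcongr
        exact hsum.sum_le_tsum _ (fun s _ => by positivity)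
    _ ≤ (B * q⁻¹ * Sg + 1) * (n : ℝ) ^ ((3.5 : ℝ) - k) * Q := by
        have : (0 : ℝ) ≤ (n : ℝ) ^ ((3.5 : ℝ) - k) * Q := by positivity
        nlinarith

theorem configProb_compl (n d : ℕ) (h : Even (n * d))
    (P : ((Fin n × Fin d) ≃ (Fin n × Fin d)) → Prop) :
    configProb n d P = 1 - configProb n d (fun M => ¬ P M) := by
  have hne : (pairings n d).Nonempty := by
    rw [← fpf_eq]
    exact fpf_nonempty (by simpa using h)
  have hpos : (0 : ℝ) < (pairings n d).card := by exact_mod_cast hne.card_pos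
  unfold configProb
  rw [eq_sub_iff_add_eq, ← add_div, div_eq_one_iff_eq hpos.ne']
  have := Finset.card_filter_add_card_filter_not (s := pairings n d) P
  rw [← Nat.cast_add, Nat.cast_inj]
  convert this

/-- Lemma: for `d ≥ 12` and `3.5 < k ≤ (1 - 1/√2) d`, with `C_{k,d} = e^{-4} (2k/d)^{1+1/(k-1)}`,
with high probability every vertex subset of the configuration-model random `d`-regular
multigraph of size at most `C_{k,d} n` is `k`-sparse (induces at most `k|S|` edges); moreover
the probability of failure is `O(n^{3.5-k})`. -/
theorem small_subsets_ksparse_random_regular (d : ℕ) (k : ℝ) (hd : 12 ≤ d)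
    (hk1 : 3.5 < k) (hk2 : k ≤ (1 - 1 / Real.sqrt 2) * d) :
    (Filter.Tendsto
      (fun n : ℕ => configProb n d (fun M =>
        ∀ S : Finset (Fin n),
          (S.card : ℝ) ≤ Real.exp (-4) * (2 * k / d) ^ (1 + 1 / (k - 1)) * n →
          (edgesWithin M S : ℝ) ≤ k * S.card))
      (Filter.atTop ⊓ Filter.principal {n : ℕ | Even (n * d)}) (nhds 1)) ∧
    ∃ C : ℝ, 0 < C ∧ ∀ n : ℕ,
      configProb n d (fun M => ¬ (∀ S : Finset (Fin n),
          (S.card : ℝ) ≤ Real.exp (-4) * (2 * k / d) ^ (1 + 1 / (k - 1)) * n →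
          (edgesWithin M S : ℝ) ≤ k * S.card))
        ≤ C * (n : ℝ) ^ ((3.5 : ℝ) - k) := by
  have hk0 : 0 < k := by norm_num at hk1; linarith
  have hd0 : (0 : ℝ) < d := by exact_mod_cast (by omega : 0 < d)
  have hu : 0 < 2 * k / d := by positivity
  have hu1 : 2 * k / d ≤ 1 := by
    rw [div_le_one hd0]
    have h1 : (1 : ℝ) / 2 ≤ 1 / Real.sqrt 2 := by
      apply one_div_le_one_div_of_le (by positivity)
      rw [Real.sqrt_le_left (by norm_num)]; norm_num
    nlinarith
  obtain ⟨c1, c2, c3, c4⟩ := C_bounds (2 * k / d) k hk1 hu hu1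
  have hfail := fail_bound d k _ hd hk1 c2 c1 c3 c4
  refine ⟨?_, hfail⟩
  obtain ⟨K, hK, hb⟩ := hfail
  have hlim : Filter.Tendsto (fun n : ℕ => 1 - K * (n : ℝ) ^ ((3.5 : ℝ) - k))
      (Filter.atTop ⊓ Filter.principal {n : ℕ | Even (n * d)}) (nhds 1) := by
    have h1 : Filter.Tendsto (fun n : ℕ => (n : ℝ) ^ ((3.5 : ℝ) - k)) Filter.atTop (nhds 0) := by
      have := (tendsto_rpow_neg_atTop (y := k - 3.5) (by linarith)).comp
        tendsto_natCast_atTop_atTop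
      simpa [Function.comp_def] using this
    have h2 := (h1.const_mul K).const_sub 1
    simp only [mul_zero, sub_zero] at h2
    exact h2.mono_left inf_le_left
  have hev : ∀ᶠ n in (Filter.atTop ⊓ Filter.principal {n : ℕ | Even (n * d)}), Even (n * d) :=
    Filter.mem_inf_of_right (Filter.mem_principal_self _)
  refine tendsto_of_tendsto_of_tendsto_of_le_of_le' hlim tendsto_const_nhds ?_ ?_
  · filter_upwards [hev] with n hn
    rw [configProb_compl n d hn]
    linarith [hb n]
  · refine Filter.Eventually.of_forall fun n => ?_
    unfold configProb
    apply div_le_one_of_le₀ _ (by positivity)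
    exact_mod_cast Finset.card_filter_le _ _

end
end

section
/- Let G_{n,d} be the configuration-model random d-regular multigraph on n vertices. Let k = k(d) = ε_d log d where 0 < ε_d ≤ 1 and ε_d → 0 as d → ∞. Then for every ε > 0 there exists d₀ = d₀(ε, (ε_d)) such that for all d ≥ d₀, with high probability as n → ∞ every k-sparse induced subgraph of G_{n,d} has at most (2 + ε) · (log d / d) · n vertices. -/
/-!
The configuration model; size bound on `k`-sparse induced subgraphs for `k = ε_d log d`.
-/

open scoped Classical

noncomputable section

section Rec
variable {α : Type*} [Fintype α] [DecidableEq α]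

/-- Involutions whose set of non-fixed points is exactly `T`. -/
def invs (T : Finset α) : Finset (Equiv.Perm α) :=
  Finset.univ.filter fun M => (∀ z, M (M z) = z) ∧ ∀ z, M z ≠ z ↔ z ∈ T

/-- Number of half-edges of `A` matched inside `A`. -/
def cnt (A : Finset α) (M : Equiv.Perm α) : ℕ :=
  (Finset.univ.filter fun h => M h ≠ h ∧ h ∈ A ∧ M h ∈ A).card

/-- Number of perfect matchings of an `N`-set. -/
def mm : ℕ → ℕ
  | 0 => 1
  | 1 => 0
  | (n+2) => (n+1) * mm n

theorem mem_invs (T : Finset α) (M : Equiv.Perm α) :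
    M ∈ invs T ↔ (∀ z, M (M z) = z) ∧ ∀ z, M z ≠ z ↔ z ∈ T := by
  simp [invs]

theorem invs_rec (T : Finset α) (x : α) (hx : x ∈ T) (f : Equiv.Perm α → ℝ) :
    ∑ M ∈ invs T, f M =
      ∑ y ∈ T.erase x, ∑ M ∈ invs ((T.erase x).erase y), f (Equiv.swap x y * M) := by
  rw [← Finset.sum_fiberwise_of_maps_to (s := invs T) (t := T.erase x) (g := fun M => M x)]
  · apply Finset.sum_congr rfl
    intro y hy
    have hyx : y ≠ x := (Finset.mem_erase.1 hy).1
    have hyT : y ∈ T := (Finset.mem_erase.1 hy).2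
    refine Finset.sum_bij' (fun M _ => Equiv.swap x y * M) (fun M _ => Equiv.swap x y * M)
      ?_ ?_ ?_ ?_ ?_
    · intro M hM
      rw [Finset.mem_filter, mem_invs] at hM
      obtain ⟨⟨h1, h2⟩, h3⟩ := hM
      have h4 : M y = x := by rw [← h3, h1]
      have key : ∀ z, z ≠ x → z ≠ y → Equiv.swap x y (M z) = M z := by
        intro z hzx hzy
        apply Equiv.swap_apply_of_ne_of_ne
        · rintro h; exact hzy (M.injective (h.trans h4.symm))
        · rintro h; exact hzx (M.injective (h.trans h3.symm))
      have kx : Equiv.swap x y (M x) = x := by rw [h3]; simp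
      have ky : Equiv.swap x y (M y) = y := by rw [h4]; simp
      rw [mem_invs]
      constructor
      · intro z
        simp only [Equiv.Perm.mul_apply]
        by_cases hzx : z = x
        · subst hzx; rw [kx, kx]
        by_cases hzy : z = y
        · subst hzy; rw [ky, ky]
        rw [key z hzx hzy, h1]
        exact Equiv.swap_apply_of_ne_of_ne hzx hzy
      · intro z
        simp only [Equiv.Perm.mul_apply, Finset.mem_erase]
        by_cases hzx : z = x
        · subst hzx; simp [kx]
        by_cases hzy : z = y
        · subst hzy; simp [ky]
        rw [key z hzx hzy, h2]
        simp [hzx, hzy]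
    · intro M hM
      rw [mem_invs] at hM
      obtain ⟨h1, h2⟩ := hM
      have hMx : M x = x := by
        by_contra h; have := (h2 x).1 h; simp at this
      have hMy : M y = y := by
        by_contra h; have := (h2 y).1 h; simp at this
      have key : ∀ z, z ≠ x → z ≠ y → Equiv.swap x y (M z) = M z := by
        intro z hzx hzy
        apply Equiv.swap_apply_of_ne_of_ne
        · rintro h; exact hzx (M.injective (h.trans hMx.symm))
        · rintro h; exact hzy (M.injective (h.trans hMy.symm))
      have kx : Equiv.swap x y (M x) = y := by rw [hMx]; simp
      have ky : Equiv.swap x y (M y) = x := by rw [hMy]; simp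
      rw [Finset.mem_filter, mem_invs]
      refine ⟨⟨?_, ?_⟩, kx⟩
      · intro z
        simp only [Equiv.Perm.mul_apply]
        by_cases hzx : z = x
        · subst hzx; rw [kx, ky]
        by_cases hzy : z = y
        · subst hzy; rw [ky, kx]
        rw [key z hzx hzy, h1]
        exact Equiv.swap_apply_of_ne_of_ne hzx hzy
      · intro z
        simp only [Equiv.Perm.mul_apply]
        by_cases hzx : z = x
        · subst hzx; simp [kx, hyx, hx]
        by_cases hzy : z = y
        · subst hzy; simp [ky, hyx.symm, hyT]
        rw [key z hzx hzy, h2]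
        simp [hzx, hzy]
    · intro M _; simp [← mul_assoc]
    · intro M _; simp [← mul_assoc]
    · intro M _; simp [← mul_assoc]
  · intro M hM
    rw [mem_invs] at hM
    obtain ⟨h1, h2⟩ := hM
    rw [Finset.mem_erase]
    refine ⟨(h2 x).2 hx, (h2 _).1 ?_⟩
    intro h
    exact (h2 x).2 hx (M.injective h)

theorem cnt_swap (A T : Finset α) (x y : α) (hx : x ∈ A) (hyx : y ≠ x)
    (M : Equiv.Perm α) (hM : M ∈ invs ((T.erase x).erase y)) :
    cnt A (Equiv.swap x y * M) = if y ∈ A then cnt A M + 2 else cnt A M := by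
  rw [mem_invs] at hM
  obtain ⟨h1, h2⟩ := hM
  have hMx : M x = x := by
    by_contra h; have := (h2 x).1 h; simp at this
  have hMy : M y = y := by
    by_contra h; have := (h2 y).1 h; simp at this
  have key : ∀ z, z ≠ x → z ≠ y → Equiv.swap x y (M z) = M z := by
    intro z hzx hzy
    apply Equiv.swap_apply_of_ne_of_ne
    · rintro h; exact hzx (M.injective (h.trans hMx.symm))
    · rintro h; exact hzy (M.injective (h.trans hMy.symm))
  have kx : Equiv.swap x y (M x) = y := by rw [hMx]; simp
  have ky : Equiv.swap x y (M y) = x := by rw [hMy]; simp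
  unfold cnt
  split_ifs with hy
  · have : (Finset.univ.filter fun h => (Equiv.swap x y * M) h ≠ h ∧ h ∈ A ∧
        (Equiv.swap x y * M) h ∈ A) = insert x (insert y
          (Finset.univ.filter fun h => M h ≠ h ∧ h ∈ A ∧ M h ∈ A)) := by
      ext z
      rw [Finset.mem_filter, Finset.mem_insert, Finset.mem_insert, Finset.mem_filter]
      simp only [Finset.mem_univ, true_and, Equiv.Perm.mul_apply]
      by_cases hzx : z = x
      · subst hzx; simp [kx, hyx, hx, hy]
      by_cases hzy : z = y
      · subst hzy; simp [ky, hyx.symm, hx, hy]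
      rw [key z hzx hzy]; simp [hzx, hzy]
    rw [this, Finset.card_insert_of_notMem, Finset.card_insert_of_notMem]
    · simp [hMy]
    · simp [hMx, hyx.symm]
  · congr 1
    ext z
    rw [Finset.mem_filter, Finset.mem_filter]
    simp only [Finset.mem_univ, true_and, Equiv.Perm.mul_apply]
    by_cases hzx : z = x
    · subst hzx; simp [kx, hMx, hy]
    by_cases hzy : z = y
    · subst hzy; simp [ky, hy]
    rw [key z hzx hzy]

theorem invs_card (T : Finset α) : ((invs T).card : ℝ) = mm T.card := by
  induction' hn : T.card using Nat.strong_induction_on with n ih generalizing T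
  match n, hn, ih with
  | 0, hn, ih =>
    have hT : T = ∅ := Finset.card_eq_zero.1 hn
    subst hT
    have : invs (∅ : Finset α) = {1} := by
      ext M
      rw [mem_invs, Finset.mem_singleton]
      constructor
      · rintro ⟨_, h⟩
        ext z
        by_contra hz
        simpa using (h z).1 hz
      · rintro rfl; simp
    rw [this]; simp [mm]
  | 1, hn, ih =>
    obtain ⟨x, rfl⟩ := Finset.card_eq_one.1 hn
    have h := invs_rec ({x} : Finset α) x (by simp) (fun _ => 1)
    simp at h
    simp [mm, h]
  | k+2, hn, ih =>
    obtain ⟨x, hx⟩ : T.Nonempty := by rw [← Finset.card_pos]; omega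
    have h := invs_rec T x hx (fun _ => 1)
    simp only [Finset.sum_const, nsmul_eq_mul, mul_one] at h
    rw [h]
    have hc : (T.erase x).card = k + 1 := by rw [Finset.card_erase_of_mem hx]; omega
    rw [Finset.sum_congr rfl (g := fun _ => (mm k : ℝ))]
    · simp [hc, mm]
    · intro y hy
      apply ih k (by omega)
      rw [Finset.card_erase_of_mem hy]; omega

theorem mm_odd (n : ℕ) (h : ¬ Even n) : mm n = 0 := by
  induction' n using Nat.strong_induction_on with n ih
  match n, h, ih with
  | 0, h, _ => simp at h
  | 1, _, _ => rfl
  | k+2, h, ih =>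
    simp [mm, ih k (by omega) (by simpa [Nat.even_add] using h)]

theorem mm_pos (n : ℕ) (h : Even n) : 0 < mm n := by
  induction' n using Nat.strong_induction_on with n ih
  match n, h, ih with
  | 0, h, _ => simp [mm]
  | 1, h, _ => simp at h
  | k+2, h, ih =>
    simp [mm, ih k (by omega) (by simpa [Nat.even_add] using h)]

/-- The expected number of internal edges. -/
def gg (a N : ℝ) : ℝ := a * (a - 1) / (2 * (N - 1))

theorem exp_aux (y D : ℝ) (hy0 : 0 ≤ y) (hy1 : y < 1) (hD0 : 0 ≤ D) (hD1 : D ≤ 1) :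
    (1 - y) * Real.exp (y * (1 - D)) ≤ 1 - y * D := by
  have ht : 1 - y * (1 - D) ≤ Real.exp (-(y * (1 - D))) := by
    have := Real.add_one_le_exp (-(y * (1 - D))); linarith
  have hpos : 0 < 1 - y * (1 - D) := by nlinarith
  have he : Real.exp (y * (1 - D)) * (1 - y * (1 - D)) ≤ 1 := by
    calc _ ≤ Real.exp (y * (1 - D)) * Real.exp (-(y * (1 - D))) := by gcongr
      _ = 1 := by rw [← Real.exp_add]; simp
  have hk : (1 - y) ≤ (1 - y * D) * (1 - y * (1 - D)) := by
    have : 0 ≤ y * y * D * (1 - D) := mul_nonneg (by positivity) (by linarith)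
    nlinarith
  have hyD : 0 ≤ 1 - y * D := by nlinarith
  calc (1 - y) * Real.exp (y * (1 - D))
      ≤ (1 - y * D) * (1 - y * (1 - D)) * Real.exp (y * (1 - D)) := by gcongr
    _ = (1 - y * D) * (Real.exp (y * (1 - D)) * (1 - y * (1 - D))) := by ring
    _ ≤ (1 - y * D) * 1 := by gcongr
    _ = _ := by ring

theorem step_main (y a N : ℝ) (hy0 : 0 ≤ y) (hy1 : y < 1) (ha : 2 ≤ a) (haN : a ≤ N - 1)
    (hN : 4 ≤ N) :
    (a - 1) * ((1 - y) * Real.exp (-y * gg (a - 2) (N - 2))) +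
      (N - a) * Real.exp (-y * gg (a - 1) (N - 2)) ≤ (N - 1) * Real.exp (-y * gg a N) := by
  set D := (N - a - 1) / (N - 3) with hD
  set p := (a - 1) / (N - 1) with hp
  have hN1 : 0 < N - 1 := by linarith
  have hN3 : 0 < N - 3 := by linarith
  have hD0 : 0 ≤ D := div_nonneg (by linarith) hN3.le
  have hD1 : D ≤ 1 := by rw [hD, div_le_one hN3]; linarith
  have hp0 : 0 ≤ p := div_nonneg (by linarith) hN1.le
  have e1 : gg (a - 2) (N - 2) = gg a N - 1 + (1 - p) * D := by
    rw [hD, hp]; unfold gg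
    have h3 : N - 2 - 1 ≠ 0 := by linarith
    have h3' : N - 3 ≠ 0 := by linarith
    have h1 : N - 1 ≠ 0 := by linarith
    rw [show N - 2 - 1 = N - 3 by ring]
    field_simp
    ring
  have e2 : gg (a - 1) (N - 2) = gg a N - p * D := by
    rw [hD, hp]; unfold gg
    have h3' : N - 3 ≠ 0 := by linarith
    have h1 : N - 1 ≠ 0 := by linarith
    rw [show N - 2 - 1 = N - 3 by ring]
    field_simp
    ring
  have hpa : a - 1 = (N - 1) * p := by rw [hp]; field_simp
  have hqa : N - a = (N - 1) * (1 - p) := by rw [mul_sub, ← hpa]; ring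
  have E1 : Real.exp (-y * gg (a - 2) (N - 2)) =
      Real.exp (-y * gg a N) * Real.exp (y * p * D) * Real.exp (y * (1 - D)) := by
    rw [e1, ← Real.exp_add, ← Real.exp_add]; congr 1; ring
  have E2 : Real.exp (-y * gg (a - 1) (N - 2)) =
      Real.exp (-y * gg a N) * Real.exp (y * p * D) := by
    rw [e2, ← Real.exp_add]; congr 1; ring
  rw [E1, E2, hpa, hqa]
  have h1 := exp_aux y D hy0 hy1 hD0 hD1
  have h2 : 1 - y * p * D ≤ Real.exp (-(y * p * D)) := by
    have := Real.add_one_le_exp (-(y * p * D)); linarith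
  have h3 : Real.exp (y * p * D) * (p * ((1 - y) * Real.exp (y * (1 - D))) + (1 - p)) ≤ 1 := by
    calc _ ≤ Real.exp (y * p * D) * (p * (1 - y * D) + (1 - p)) := by gcongr
      _ = Real.exp (y * p * D) * (1 - y * p * D) := by ring
      _ ≤ Real.exp (y * p * D) * Real.exp (-(y * p * D)) := by gcongr
      _ = 1 := by rw [← Real.exp_add]; simp
  calc _ = (N - 1) * Real.exp (-y * gg a N) *
        (Real.exp (y * p * D) * (p * ((1 - y) * Real.exp (y * (1 - D))) + (1 - p))) := by ring
    _ ≤ (N - 1) * Real.exp (-y * gg a N) * 1 := by gcongr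
    _ = _ := by ring

theorem step_all (y : ℝ) (a N : ℕ) (hy0 : 0 ≤ y) (hy1 : y < 1) (ha : 1 ≤ a) (haN : a ≤ N)
    (hN : Even N) :
    ((a : ℝ) - 1) * ((1 - y) * Real.exp (-y * gg ((a : ℝ) - 2) ((N : ℝ) - 2))) +
      ((N : ℝ) - a) * Real.exp (-y * gg ((a : ℝ) - 1) ((N : ℝ) - 2))
      ≤ ((N : ℝ) - 1) * Real.exp (-y * gg a N) := by
  rcases eq_or_lt_of_le ha with h1 | h1
  · subst h1; simp [gg]
  rcases eq_or_lt_of_le haN with h2 | h2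
  · subst h2
    have h3 : (a : ℝ) ≠ 3 := by
      intro h; have : a = 3 := by exact_mod_cast h
      subst this; revert hN; decide
    have ha2 : (2 : ℝ) ≤ a := by exact_mod_cast h1
    have g1 : gg ((a : ℝ) - 2) ((a : ℝ) - 2) = (a - 2) / 2 := by
      unfold gg
      have : (a : ℝ) - 2 - 1 ≠ 0 := by intro h; apply h3; linarith
      field_simp
    have g2 : gg (a : ℝ) (a : ℝ) = a / 2 := by
      unfold gg
      have : (a : ℝ) - 1 ≠ 0 := by linarith
      field_simp
    rw [g1, g2, sub_self, zero_mul, add_zero]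
    have : 0 ≤ (a : ℝ) - 1 := by linarith
    gcongr
    rw [show -y * ((a - 2 : ℝ) / 2) = -y * (a / 2) + y by ring, Real.exp_add]
    have h4 := exp_aux y 0 hy0 hy1 le_rfl zero_le_one
    simp at h4
    calc _ = Real.exp (-y * (a / 2)) * ((1 - y) * Real.exp y) := by ring
      _ ≤ Real.exp (-y * (a / 2)) * 1 := by gcongr
      _ = _ := by ring
  · have h4 : 4 ≤ N := by
      rcases hN with ⟨r, rfl⟩; omega
    apply step_main y a N hy0 hy1
    · exact_mod_cast h1
    · have : (a : ℝ) + 1 ≤ N := by exact_mod_cast h2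
      linarith
    · exact_mod_cast h4

theorem mgf_bound (A : Finset α) (y : ℝ) (hy0 : 0 ≤ y) (hy1 : y < 1) (T : Finset α) :
    ∑ M ∈ invs T, (1 - y) ^ (cnt A M / 2) ≤
      Real.exp (-y * gg ((A ∩ T).card) (T.card)) * mm T.card := by
  induction' hn : T.card using Nat.strong_induction_on with n ih generalizing T
  by_cases hev : Even n
  swap
  · have h0 : ((invs T).card : ℝ) = 0 := by rw [invs_card, hn, mm_odd n hev]; simp
    have : invs T = ∅ := by simpa using h0
    rw [this, mm_odd n hev]; simp
  rcases (A ∩ T).eq_empty_or_nonempty with he | ⟨x, hx⟩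
  · rw [he]
    simp only [gg, Finset.card_empty, Nat.cast_zero, zero_mul, zero_div, mul_zero, Real.exp_zero,
      one_mul]
    rw [← hn, ← invs_card, Finset.cast_card]
    apply Finset.sum_le_sum
    intro M _
    exact pow_le_one₀ (by linarith) (by linarith)
  · obtain ⟨hxA, hxT⟩ := Finset.mem_inter.1 hx
    rw [invs_rec T x hxT]
    have hle : (A ∩ T).card ≤ n := hn ▸ Finset.card_le_card Finset.inter_subset_right
    have hpos : 1 ≤ (A ∩ T).card := Finset.card_pos.2 ⟨x, hx⟩
    obtain ⟨k, rfl⟩ : ∃ k, n = k + 2 := by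
      rcases hev with ⟨r, rfl⟩
      exact ⟨r + r - 2, by omega⟩
    set a := (A ∩ T).card with ha
    have hyp : ∀ y' ∈ T.erase x, ∑ M ∈ invs ((T.erase x).erase y'),
        (1 - y) ^ (cnt A (Equiv.swap x y' * M) / 2) ≤
        if y' ∈ A then (1 - y) * Real.exp (-y * gg ((a : ℝ) - 2) ((k + 2 : ℕ) - 2)) * mm k
          else Real.exp (-y * gg ((a : ℝ) - 1) ((k + 2 : ℕ) - 2)) * mm k := by
      intro z hz
      obtain ⟨hzx, hzT⟩ := Finset.mem_erase.1 hz
      have hcard : ((T.erase x).erase z).card = k := by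
        rw [Finset.card_erase_of_mem hz, Finset.card_erase_of_mem hxT]; omega
      have IH := ih k (by omega) ((T.erase x).erase z) hcard
      have hk : (((k + 2 : ℕ) : ℝ) - 2) = k := by push_cast; ring
      rw [hk]
      split_ifs with hzA
      · have hc : ((A ∩ ((T.erase x).erase z)).card : ℝ) = (a : ℝ) - 2 := by
          have e : A ∩ ((T.erase x).erase z) = ((A ∩ T).erase x).erase z := by
            ext w; simp; tauto
          have h2 : z ∈ (A ∩ T).erase x := by simp [hzx, hzA, hzT]
          rw [e, Finset.cast_card_erase_of_mem h2, Finset.cast_card_erase_of_mem hx]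
          ring
        rw [hc] at IH
        calc _ = (1 - y) * ∑ M ∈ invs ((T.erase x).erase z), (1 - y) ^ (cnt A M / 2) := by
              rw [Finset.mul_sum]
              apply Finset.sum_congr rfl
              intro M hM
              rw [cnt_swap A T x z hxA hzx M hM, if_pos hzA, Nat.add_div_right _ (by norm_num),
                pow_succ]
              ring
          _ ≤ (1 - y) * (Real.exp (-y * gg ((a : ℝ) - 2) k) * mm k) := by
              gcongr
          _ = _ := by ring
      · have hc : ((A ∩ ((T.erase x).erase z)).card : ℝ) = (a : ℝ) - 1 := by
          have e : A ∩ ((T.erase x).erase z) = ((A ∩ T).erase x) := by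
            ext w
            simp only [Finset.mem_inter, Finset.mem_erase]
            constructor
            · tauto
            · rintro ⟨h1, h2, h3⟩
              exact ⟨h2, fun h => hzA (h ▸ h2), h1, h3⟩
          rw [e, Finset.cast_card_erase_of_mem hx]
        rw [hc] at IH
        refine le_trans (le_of_eq ?_) IH
        apply Finset.sum_congr rfl
        intro M hM
        rw [cnt_swap A T x z hxA hzx M hM, if_neg hzA]
    refine (Finset.sum_le_sum hyp).trans ?_
    rw [Finset.sum_ite, Finset.sum_const, Finset.sum_const, nsmul_eq_mul, nsmul_eq_mul]
    have c1 : (((T.erase x).filter fun z => z ∈ A).card : ℝ) = (a : ℝ) - 1 := by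
      rw [show (T.erase x).filter (fun z => z ∈ A) = (A ∩ T).erase x by ext w; simp; tauto,
        Finset.cast_card_erase_of_mem hx]
    have c2 : (((T.erase x).filter fun z => z ∉ A).card : ℝ) = ((k + 2 : ℕ) : ℝ) - a := by
      have h := Finset.card_filter_add_card_filter_not (s := T.erase x) (fun z => z ∈ A)
      have h' : (((T.erase x).filter fun z => z ∈ A).card : ℝ) +
          (((T.erase x).filter fun z => z ∉ A).card : ℝ) = ((T.erase x).card : ℝ) := by
        exact_mod_cast h
      rw [c1, Finset.cast_card_erase_of_mem hxT, hn] at h'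
      linarith
    rw [c1, c2]
    have hs := step_all y a (k + 2) hy0 hy1 hpos hle hev
    have hmm : (mm (k + 2) : ℝ) = (((k + 2 : ℕ) : ℝ) - 1) * mm k := by
      simp only [mm]; push_cast; ring
    rw [hmm]
    calc _ = (((a : ℝ) - 1) * ((1 - y) * Real.exp (-y * gg ((a : ℝ) - 2) ((k + 2 : ℕ) - 2))) +
      (((k + 2 : ℕ) : ℝ) - a) * Real.exp (-y * gg ((a : ℝ) - 1) ((k + 2 : ℕ) - 2))) * mm k := by
          ring
      _ ≤ _ := mul_le_mul_of_nonneg_right hs (by positivity)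
      _ = _ := by ring

end Rec

theorem pairings_eq (n d : ℕ) : pairings n d = invs Finset.univ := by
  ext M
  rw [mem_invs]
  simp [pairings]

theorem edgesWithin_eq {n d : ℕ} (M : (Fin n × Fin d) ≃ (Fin n × Fin d))
    (hM : M ∈ pairings n d) (S : Finset (Fin n)) :
    edgesWithin M S = cnt (S ×ˢ (Finset.univ : Finset (Fin d))) M / 2 := by
  have h : ∀ x, M x ≠ x := by
    have := hM
    simp only [pairings, Finset.mem_filter] at this
    exact this.2.2
  unfold edgesWithin cnt
  congr 2
  ext z
  simp [h]

theorem one_set_bound (n d : ℕ) (S : Finset (Fin n)) (L K : ℝ) (hL : 0 ≤ L) :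
    (((pairings n d).filter fun M => (edgesWithin M S : ℝ) ≤ K).card : ℝ) ≤
      Real.exp (L * K) * Real.exp (-(1 - Real.exp (-L)) * gg (S.card * d) (n * d)) *
        mm (n * d) := by
  have hx1 : Real.exp (-L) ≤ 1 := by simpa using hL
  have hx0 := Real.exp_pos (-L)
  have hb := mgf_bound (S ×ˢ (Finset.univ : Finset (Fin d))) (1 - Real.exp (-L))
    (by linarith) (by linarith) Finset.univ
  rw [← pairings_eq] at hb
  simp only [Finset.inter_univ, Finset.card_product, Finset.card_univ, Fintype.card_fin,
    Fintype.card_prod, Nat.cast_mul, sub_sub_cancel] at hb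
  rw [Finset.cast_card, Finset.sum_filter]
  calc _ ≤ ∑ M ∈ pairings n d, Real.exp (L * K) *
        Real.exp (-L) ^ (cnt (S ×ˢ (Finset.univ : Finset (Fin d))) M / 2) := by
        apply Finset.sum_le_sum
        intro M hM
        rw [← edgesWithin_eq M hM S]
        split_ifs with h
        · rw [← Real.exp_nat_mul, ← Real.exp_add]
          apply Real.one_le_exp
          nlinarith
        · positivity
    _ = Real.exp (L * K) * ∑ M ∈ pairings n d,
        Real.exp (-L) ^ (cnt (S ×ˢ (Finset.univ : Finset (Fin d))) M / 2) := by
        rw [Finset.mul_sum]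
    _ ≤ Real.exp (L * K) * (Real.exp (-(1 - Real.exp (-L)) * gg (S.card * d) (n * d)) *
        mm (n * d)) := by
        gcongr
    _ = _ := by ring

/-- The bad event for one large set has tiny probability. -/
theorem one_set_bound' (n d : ℕ) (S : Finset (Fin n)) (L k ε l : ℝ) (hL : 0 ≤ L)
    (hε : 0 < ε) (hd : 1 ≤ d) (hl : 0 < l)
    (hLw : Real.exp (-L) * (1 + ε / 2) ≤ ε / 8) (hk : L * k ≤ ε / 8 * l)
    (hlε : 1 / 2 ≤ ε / 8 * l)
    (hS : (2 + ε) * (l / d) * n < S.card) :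
    (((pairings n d).filter fun M => (edgesWithin M S : ℝ) ≤ k * S.card).card : ℝ) ≤
      Real.exp (-(1 + ε / 8) * l * S.card) * mm (n * d) := by
  refine (one_set_bound n d S L (k * S.card) hL).trans ?_
  gcongr
  rw [← Real.exp_add]
  apply Real.exp_le_exp.2
  set x := Real.exp (-L) with hx
  have hx1 : x ≤ 1 := by simpa [hx] using hL
  have hx0 : 0 < x := Real.exp_pos (-L)
  set s : ℝ := (S.card : ℝ) with hs
  have hd' : (1 : ℝ) ≤ d := by exact_mod_cast hd
  have hspos : 0 < s := lt_of_le_of_lt (by positivity) hS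
  have hs1 : 1 ≤ s := by
    rw [hs]; rw [hs] at hspos
    exact_mod_cast hspos
  have hsn : s ≤ n := by
    have := Finset.card_le_univ S
    rw [Fintype.card_fin] at this
    rw [hs]; exact_mod_cast this
  have hn1 : (1 : ℝ) ≤ n := hs1.trans hsn
  have hdpos : (0 : ℝ) < d := by linarith
  have hg : s * ((2 + ε) * l - 1) / 2 ≤ gg (s * d) (n * d) := by
    have hsd : (2 + ε) * l * n ≤ s * d := by
      have := mul_le_mul_of_nonneg_right hS.le hdpos.le
      calc _ = (2 + ε) * (l / d) * n * d := by field_simp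
        _ ≤ _ := this
    unfold gg
    by_cases h1 : (n : ℝ) * d - 1 = 0
    · exfalso
      have h4 : 4 ≤ ε * l := by linarith
      have h5 : (n:ℝ) * d = 1 := by linarith
      have h6 : s * d ≤ n * d := by gcongr
      have h7 : ε * l * 1 ≤ ε * l * n := by gcongr
      have h8 : 0 ≤ l * n := by positivity
      nlinarith
    have h2 : 0 < (n : ℝ) * d - 1 := by
      apply lt_of_le_of_ne _ (Ne.symm h1)
      nlinarith
    rw [div_le_div_iff₀ (by norm_num) (by linarith)]
    have h3 : ((2 + ε) * l - 1) * n ≤ s * d - 1 := by nlinarith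
    have h4 : 4 ≤ ε * l := by linarith
    have h5 : 0 ≤ (2 + ε) * l - 1 := by nlinarith
    have h6 : ((2 + ε) * l - 1) * (n * d - 1) ≤ d * (s * d - 1) := by nlinarith
    nlinarith
  have h1 : (1 - x) * (s * ((2 + ε) * l - 1) / 2) ≤ (1 - x) * gg (s * d) (n * d) :=
    mul_le_mul_of_nonneg_left hg (by linarith)
  have h2 : L * k * s ≤ ε / 8 * l * s := by gcongr
  have h3 : x * (1 + ε / 2) * (l * s) ≤ ε / 8 * (l * s) := by gcongr
  have h4 : 1 / 2 * s ≤ ε / 8 * l * s := by gcongr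
  have h5 : 0 ≤ x * s := by positivity
  nlinarith

theorem all_sets_bound (n d : ℕ) (L k ε l : ℝ) (hL : 0 ≤ L)
    (hε : 0 < ε) (hd : 1 ≤ d) (hl : 2 ≤ l) (hdl : l = Real.log d)
    (hLw : Real.exp (-L) * (1 + ε / 2) ≤ ε / 8) (hk : L * k ≤ ε / 8 * l)
    (hlε : 1 / 2 ≤ ε / 8 * l) :
    (((pairings n d).filter fun M => ¬ ∀ S : Finset (Fin n),
        (edgesWithin M S : ℝ) ≤ k * S.card → (S.card : ℝ) ≤ (2 + ε) * (l / d) * n).card : ℝ) ≤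
      Real.exp (-(ε / 8 * l * ((2 + ε) * (l / d)) * n)) * mm (n * d) := by
  set a : ℝ := (2 + ε) * (l / d) with ha
  have hdpos : (0 : ℝ) < d := by exact_mod_cast hd
  have hapos : 0 < a := by positivity
  set big : Finset (Finset (Fin n)) := Finset.univ.filter fun S => a * n < (S.card : ℝ) with hbig
  have hsub : ((pairings n d).filter fun M => ¬ ∀ S : Finset (Fin n),
        (edgesWithin M S : ℝ) ≤ k * S.card → (S.card : ℝ) ≤ a * n) ⊆
      big.biUnion fun S => (pairings n d).filter fun M => (edgesWithin M S : ℝ) ≤ k * S.card := by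
    intro M hM
    rw [Finset.mem_filter] at hM
    obtain ⟨hM, h⟩ := hM
    push Not at h
    obtain ⟨S, h1, h2⟩ := h
    rw [Finset.mem_biUnion]
    exact ⟨S, by simp [hbig, h2], by rw [Finset.mem_filter]; exact ⟨hM, h1⟩⟩
  have h1 : ∀ S ∈ big, (((pairings n d).filter fun M =>
      (edgesWithin M S : ℝ) ≤ k * S.card).card : ℝ) ≤
      Real.exp (-(ε / 8 * l * a * n)) * Real.exp (-(a * n)) * mm (n * d) * a ^ S.card := by
    intro S hS
    have hS' : a * n < S.card := by simpa [hbig] using hS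
    refine (one_set_bound' n d S L k ε l hL hε hd (by linarith) hLw hk hlε hS').trans ?_
    have e1 : Real.exp (-(1 + ε / 8) * l * S.card) =
        Real.exp (-(ε / 8 * l * S.card)) * Real.exp (-(l * S.card)) := by
      rw [← Real.exp_add]; congr 1; ring
    have e2 : Real.exp (-(ε / 8 * l * S.card)) ≤ Real.exp (-(ε / 8 * l * a * n)) := by
      apply Real.exp_le_exp.2
      have : ε / 8 * l * (a * n) ≤ ε / 8 * l * S.card := by gcongr
      linarith
    have e3 : Real.exp (-l) ≤ a * Real.exp (-1) := by
      have hexp : Real.exp (-l) = 1 / d := by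
        rw [hdl, Real.exp_neg, Real.exp_log hdpos]; simp
      rw [hexp, ha]
      have h4 : (4 : ℝ) ≤ (2 + ε) * l := by nlinarith
      have h5 : (1 : ℝ) / 4 ≤ Real.exp (-1) := by
        rw [Real.exp_neg, ← one_div]
        apply one_div_le_one_div_of_le (Real.exp_pos 1)
        linarith [Real.exp_one_lt_d9]
      calc (1 : ℝ) / d = 4 * (1 / 4) / d := by norm_num
        _ ≤ (2 + ε) * l * Real.exp (-1) / d := by gcongr
        _ = _ := by ring
    have e4 : Real.exp (-(l * S.card)) ≤ a ^ S.card * Real.exp (-(a * n)) := by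
      calc Real.exp (-(l * S.card)) = Real.exp (-l) ^ S.card := by
            rw [← Real.exp_nat_mul]; congr 1; ring
        _ ≤ (a * Real.exp (-1)) ^ S.card := by gcongr
        _ = a ^ S.card * Real.exp (-(S.card : ℝ)) := by
            rw [mul_pow, ← Real.exp_nat_mul]; congr 2; ring
        _ ≤ _ := by gcongr
    rw [e1]
    calc _ ≤ Real.exp (-(ε / 8 * l * a * n)) * (a ^ S.card * Real.exp (-(a * n))) *
          mm (n * d) := by gcongr
      _ = _ := by ring
  have h2 : ∑ S : Finset (Fin n), a ^ S.card = (a + 1) ^ n := by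
    have := Fintype.sum_pow_mul_eq_add_pow (Fin n) a (1 : ℝ)
    simpa using this
  have h3 : (a + 1) ^ n ≤ Real.exp (a * n) := by
    calc (a + 1) ^ n ≤ Real.exp a ^ n := by
          gcongr
          exact Real.add_one_le_exp a
      _ = _ := by rw [← Real.exp_nat_mul]; congr 1; ring
  calc _ ≤ ((big.biUnion fun S => (pairings n d).filter fun M =>
        (edgesWithin M S : ℝ) ≤ k * S.card).card : ℝ) := by
        exact_mod_cast Finset.card_le_card hsub
    _ ≤ ∑ S ∈ big, (((pairings n d).filter fun M =>
      (edgesWithin M S : ℝ) ≤ k * S.card).card : ℝ) := by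
        exact_mod_cast Finset.card_biUnion_le
    _ ≤ ∑ S ∈ big, Real.exp (-(ε / 8 * l * a * n)) * Real.exp (-(a * n)) *
        mm (n * d) * a ^ S.card := Finset.sum_le_sum h1
    _ ≤ ∑ S : Finset (Fin n), Real.exp (-(ε / 8 * l * a * n)) * Real.exp (-(a * n)) *
        mm (n * d) * a ^ S.card := by
        apply Finset.sum_le_sum_of_subset_of_nonneg (Finset.subset_univ _)
        intro S _ _
        positivity
    _ = Real.exp (-(ε / 8 * l * a * n)) * Real.exp (-(a * n)) * mm (n * d) * (a + 1) ^ n := by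
        rw [← Finset.mul_sum, h2]
    _ ≤ Real.exp (-(ε / 8 * l * a * n)) * Real.exp (-(a * n)) * mm (n * d) *
        Real.exp (a * n) := by gcongr
    _ = Real.exp (-(ε / 8 * l * a * n)) * mm (n * d) *
        (Real.exp (-(a * n)) * Real.exp (a * n)) := by ring
    _ = _ := by rw [← Real.exp_add]; simp

theorem configProb_ge (n d : ℕ) (P : ((Fin n × Fin d) ≃ (Fin n × Fin d)) → Prop) (b : ℝ)
    (hev : Even (n * d))
    (hb : (((pairings n d).filter fun M => ¬ P M).card : ℝ) ≤ b * mm (n * d)) :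
    1 - b ≤ configProb n d P := by
  have hcard : ((pairings n d).card : ℝ) = mm (n * d) := by
    rw [pairings_eq, invs_card]; simp
  have hmpos : (0 : ℝ) < mm (n * d) := by exact_mod_cast mm_pos _ hev
  unfold configProb
  rw [hcard, le_div_iff₀ hmpos]
  have hsplit : (((pairings n d).filter P).card : ℝ) +
      (((pairings n d).filter fun M => ¬ P M).card : ℝ) = ((pairings n d).card : ℝ) := by
    exact_mod_cast Finset.card_filter_add_card_filter_not (s := pairings n d) P
  rw [hcard] at hsplit
  linarith

/-- Lemma: let `k = ε_d log d` with `0 < ε_d ≤ 1` and `ε_d → 0`.  For every `ε > 0` there is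
`d₀` such that for all `d ≥ d₀`, with high probability (as `n → ∞` along `n` with `n*d` even)
every `k`-sparse induced subgraph of the configuration-model random `d`-regular multigraph
has at most `(2 + ε) (log d / d) n` vertices. -/
theorem ksparse_density_bound_random_regular
    (εd : ℕ → ℝ) (hpos : ∀ d : ℕ, 0 < εd d) (hle : ∀ d : ℕ, εd d ≤ 1)
    (hlim : Filter.Tendsto εd Filter.atTop (nhds 0))
    (ε : ℝ) (hε : 0 < ε) :
    ∃ d₀ : ℕ, ∀ d : ℕ, d₀ ≤ d →
      Filter.Tendsto
        (fun n : ℕ => configProb n d (fun M =>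
          ∀ S : Finset (Fin n),
            (edgesWithin M S : ℝ) ≤ (εd d * Real.log d) * S.card →
            (S.card : ℝ) ≤ (2 + ε) * (Real.log d / d) * n))
        (Filter.atTop ⊓ Filter.principal {n : ℕ | Even (n * d)}) (nhds 1) := by
  -- choose the parameter of the exponential moment
  set w : ℝ := ε / 8 / (1 + ε / 2) with hw
  have hw0 : 0 < w := by positivity
  have hw1 : w ≤ 1 := by rw [hw, div_le_one (by positivity)]; linarith
  set L : ℝ := -Real.log w with hLdef
  have hL : 0 ≤ L := by
    have := Real.log_nonpos hw0.le hw1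
    linarith
  have hLw : Real.exp (-L) * (1 + ε / 2) ≤ ε / 8 := by
    rw [hLdef, neg_neg, Real.exp_log hw0, hw]
    apply le_of_eq
    field_simp
  have hlog : Filter.Tendsto (fun d : ℕ => Real.log d) Filter.atTop Filter.atTop :=
    Real.tendsto_log_atTop.comp tendsto_natCast_atTop_atTop
  have t1 : Filter.Tendsto (fun d => L * εd d) Filter.atTop (nhds 0) := by
    simpa using hlim.const_mul L
  have ev1 : ∀ᶠ d in Filter.atTop, L * εd d ≤ ε / 8 :=
    t1.eventually_le_const (by positivity)
  have ev := ev1.and ((hlog.eventually_ge_atTop (max 2 (4 / ε))).and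
    (Filter.eventually_ge_atTop 1))
  obtain ⟨d₀, hd₀⟩ := Filter.eventually_atTop.1 ev
  refine ⟨d₀, fun d hd => ?_⟩
  obtain ⟨q1, q2, q3⟩ := hd₀ d hd
  have hl2 : 2 ≤ Real.log d := (le_max_left _ _).trans q2
  have hl4 : 4 / ε ≤ Real.log d := (le_max_right _ _).trans q2
  have hlε : 1 / 2 ≤ ε / 8 * Real.log d := by
    rw [div_le_iff₀ hε] at hl4
    linarith
  have hdpos : (0 : ℝ) < d := by exact_mod_cast q3
  have hk : L * (εd d * Real.log d) ≤ ε / 8 * Real.log d := by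
    rw [← mul_assoc]
    gcongr
  set c : ℝ := ε / 8 * Real.log d * ((2 + ε) * (Real.log d / d)) with hc
  have hcpos : 0 < c := by
    have : 0 < Real.log d := by linarith
    positivity
  have hlow : Filter.Tendsto (fun n : ℕ => 1 - Real.exp (-(c * n)))
      (Filter.atTop ⊓ Filter.principal {n : ℕ | Even (n * d)}) (nhds 1) := by
    have h1 : Filter.Tendsto (fun n : ℕ => c * (n : ℝ)) Filter.atTop Filter.atTop :=
      Filter.Tendsto.const_mul_atTop hcpos tendsto_natCast_atTop_atTop
    have h2 := (Real.tendsto_exp_neg_atTop_nhds_zero.comp h1).const_sub 1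
    rw [sub_zero] at h2
    exact h2.mono_left inf_le_left
  refine tendsto_of_tendsto_of_tendsto_of_le_of_le' hlow tendsto_const_nhds ?_ ?_
  · rw [Filter.eventually_inf_principal]
    refine Filter.Eventually.of_forall fun n hn => ?_
    have hev : Even (n * d) := hn
    have hb := all_sets_bound n d L (εd d * Real.log d) ε (Real.log d) hL hε q3 hl2 rfl hLw hk hlε
    rw [← hc] at hb
    apply configProb_ge n d _ _ hev
    convert hb
  · refine Filter.Eventually.of_forall fun n => ?_
    unfold configProb
    apply div_le_one_of_le₀ _ (by positivity)
    exact_mod_cast Finset.card_filter_le _ _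

end
end

section
/- Let G_{n,d} be the configuration-model random d-regular multigraph on n vertices and let Z_{i,j} be the number of vertex subsets S with |S| = i inducing exactly j edges. Suppose 1 ≤ k ≤ d/2 and 1 ≤ i ≤ (2k/d)·n with k·i an integer. Then over the range k·i ≤ j ≤ (d/2)·i, the expectation E[Z_{i,j}] is maximized at j = k·i; that is, E[Z_{i,j}] ≤ E[Z_{i,ki}] for all integers j with k·i ≤ j ≤ (d/2)·i. -/
/-!
The configuration model; over the range `ki ≤ j ≤ (d/2) i` the expectation `E[Z_{i,j}]`
is maximized at `j = ki`.
-/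

open scoped Classical

noncomputable section

/-- `Z_{i,j}`: the number of vertex subsets `S` with `|S| = i` inducing exactly `j` edges. -/
def Zcount (n d i j : ℕ) (M : (Fin n × Fin d) ≃ (Fin n × Fin d)) : ℕ :=
  (Finset.univ.filter fun S : Finset (Fin n) => S.card = i ∧ edgesWithin M S = j).card

/-- The expectation of `Z_{i,j}` under the uniform distribution on pairings. -/
def EZ (n d i j : ℕ) : ℝ :=
  (∑ M ∈ pairings n d, (Zcount n d i j M : ℝ)) / ((pairings n d).card : ℝ)

section helpers

variable {H : Type*} [Fintype H]

/-- fixed-point free involution -/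
def IsPairing (M : H ≃ H) : Prop := (∀ x, M (M x) = x) ∧ ∀ x, M x ≠ x

def innerH (A : Finset H) (M : H ≃ H) : Finset H :=
  Finset.univ.filter fun h => h ∈ A ∧ M h ∈ A

def crossH (A : Finset H) (M : H ≃ H) : Finset H :=
  Finset.univ.filter fun h => h ∈ A ∧ M h ∉ A

def outerH (A : Finset H) (M : H ≃ H) : Finset H :=
  Finset.univ.filter fun h => h ∉ A ∧ M h ∉ A

def pairJ (A : Finset H) (j : ℕ) : Finset (H ≃ H) :=
  Finset.univ.filter fun M => IsPairing M ∧ (innerH A M).card = 2 * j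

lemma inner_even (A : Finset H) (M : H ≃ H) (hM : IsPairing M) : Even (innerH A M).card := by
  have h : ∑ x ∈ innerH A M, (1 : ZMod 2) = 0 := by
    refine Finset.sum_involution (fun x _ => M x) ?_ ?_ ?_ ?_
    · intro a ha
      decide
    · intro a ha _
      exact hM.2 a
    · intro a ha
      simp only [innerH, Finset.mem_filter, Finset.mem_univ, true_and] at ha ⊢
      rw [hM.1]
      exact ⟨ha.2, ha.1⟩
    · intro a ha
      exact hM.1 a
  rw [Finset.sum_const, nsmul_eq_mul, mul_one] at h
  exact (ZMod.natCast_eq_zero_iff_even).1 h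

lemma inner_add_cross (A : Finset H) (M : H ≃ H) :
    (innerH A M).card + (crossH A M).card = A.card := by
  have h := Finset.card_filter_add_card_filter_not (s := A) (fun h => M h ∈ A)
  have h1 : innerH A M = A.filter (fun h => M h ∈ A) := by
    ext x; simp [innerH]
  have h2 : crossH A M = A.filter (fun h => ¬ M h ∈ A) := by
    ext x; simp [crossH]
  rw [h1, h2]; exact h

lemma cross_add_outer (A : Finset H) (M : H ≃ H) (hM : IsPairing M) :
    (crossH A M).card + (outerH A M).card + A.card = Fintype.card H := by
  have h := Finset.card_filter_add_card_filter_not (s := Aᶜ) (fun h => M h ∈ A)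
  have h1 : outerH A M = Aᶜ.filter (fun h => ¬ M h ∈ A) := by
    ext x; simp [outerH]
  have h2 : (crossH A M).card = (Aᶜ.filter (fun h => M h ∈ A)).card := by
    refine Finset.card_bij (fun x _ => M x) ?_ ?_ ?_
    · intro a ha
      simp only [crossH, Finset.mem_filter, Finset.mem_univ, true_and, Finset.mem_compl] at ha ⊢
      rw [hM.1]
      exact ⟨ha.2, ha.1⟩
    · intro a _ b _ hab
      exact M.injective hab
    · intro b hb
      refine ⟨M b, ?_, hM.1 b⟩
      simp only [crossH, Finset.mem_filter, Finset.mem_univ, true_and, Finset.mem_compl] at hb ⊢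
      rw [hM.1]
      exact ⟨hb.2, hb.1⟩
  rw [h1, h2, h, Finset.card_compl]
  have := Finset.card_le_univ A
  omega

def switchH (M : H ≃ H) (y u : H) : H ≃ H :=
  (Equiv.swap y u).trans (M.trans (Equiv.swap y u))

lemma switch_switch (M : H ≃ H) (y u : H) : switchH (switchH M y u) y u = M := by
  ext h; simp [switchH]

lemma switch_pairing (M : H ≃ H) (y u : H) (hM : IsPairing M) : IsPairing (switchH M y u) := by
  refine ⟨fun x => by simp [switchH, hM.1], fun x hx => ?_⟩
  apply hM.2 (Equiv.swap y u x)
  have := congrArg (Equiv.swap y u) hx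
  simpa [switchH] using this

lemma switch_inner (A : Finset H) (M : H ≃ H) (hM : IsPairing M) (x u : H)
    (hx : x ∈ innerH A M) (hu : u ∈ outerH A M) :
    innerH A (switchH M (M x) u) = (innerH A M) \ {x, M x} := by
  simp only [innerH, outerH, Finset.mem_filter, Finset.mem_univ, true_and] at hx hu
  have hxx := hM.2 x
  have hMM := hM.1
  have hinj := M.injective
  ext h
  simp only [innerH, Finset.mem_filter, Finset.mem_univ, true_and, Finset.mem_sdiff,
    Finset.mem_insert, Finset.mem_singleton]
  simp only [switchH, Equiv.trans_apply]
  by_cases h1 : h = M x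
  · subst h1
    rw [Equiv.swap_apply_left, Equiv.swap_apply_of_ne_of_ne]
    · simp [hu.2]
    · intro h; exact hu.2 (h ▸ hx.2)
    · intro h; exact hM.2 u h
  by_cases h2 : h = u
  · subst h2
    simp [hu.1]
  rw [Equiv.swap_apply_of_ne_of_ne h1 h2]
  by_cases h3 : h = x
  · subst h3
    simp [hu.1]
  have h4 : M h ≠ M x := fun e => h3 (hinj e)
  by_cases h5 : M h = u
  · have : h = M u := by rw [← h5, hMM]
    subst this
    simp [hu.2]
  rw [Equiv.swap_apply_of_ne_of_ne h4 h5]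
  simp [h1, h3]

lemma switch_count (A : Finset H) (j : ℕ) :
    ((pairJ A (j+1)).sigma fun M => innerH A M ×ˢ outerH A M).card
      ≤ ((pairJ A j).sigma fun M => (crossH A M).offDiag).card := by
  refine Finset.card_le_card_of_injOn
    (fun p => ⟨switchH p.1 (p.1 p.2.1) p.2.2, (p.2.1, p.1 p.2.1)⟩) ?_ ?_
  · rintro ⟨M, x, u⟩ hp
    simp only [Finset.coe_sigma, Set.mem_sigma_iff, Finset.mem_coe, Finset.mem_product] at hp
    obtain ⟨hM, hx, hu⟩ := hp
    simp only [pairJ, Finset.mem_filter, Finset.mem_univ, true_and] at hM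
    obtain ⟨hM, hc⟩ := hM
    simp only [Finset.coe_sigma, Set.mem_sigma_iff, Finset.mem_coe, Finset.mem_offDiag]
    have hsub : ({x, M x} : Finset H) ⊆ innerH A M := by
      intro z hz
      simp only [Finset.mem_insert, Finset.mem_singleton] at hz
      rcases hz with rfl | rfl
      · exact hx
      · simp only [innerH, Finset.mem_filter, Finset.mem_univ, true_and] at hx ⊢
        rw [hM.1]; exact ⟨hx.2, hx.1⟩
    refine ⟨?_, ?_, ?_, ?_⟩
    · simp only [pairJ, Finset.mem_filter, Finset.mem_univ, true_and]
      refine ⟨switch_pairing _ _ _ hM, ?_⟩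
      rw [switch_inner A M hM x u hx hu, Finset.card_sdiff_of_subset hsub,
        Finset.card_pair (hM.2 x).symm, hc]
      omega
    · simp only [innerH, outerH, crossH, Finset.mem_filter, Finset.mem_univ, true_and] at hx hu ⊢
      refine ⟨hx.1, ?_⟩
      simp only [switchH, Equiv.trans_apply]
      rw [Equiv.swap_apply_of_ne_of_ne (hM.2 x).symm, Equiv.swap_apply_left]
      · exact hu.1
      · rintro rfl; exact hu.1 hx.1
    · simp only [innerH, outerH, crossH, Finset.mem_filter, Finset.mem_univ, true_and] at hx hu ⊢
      refine ⟨hx.2, ?_⟩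
      simp only [switchH, Equiv.trans_apply]
      rw [Equiv.swap_apply_left, Equiv.swap_apply_of_ne_of_ne]
      · exact hu.2
      · intro h; exact hu.2 (h ▸ hx.2)
      · exact hM.2 u
    · exact (hM.2 x).symm
  · have key : ∀ (M : H ≃ H) (x u : H), IsPairing M → x ∈ innerH A M → u ∈ outerH A M →
        switchH M (M x) u x = u := by
      intro M x u hM hx hu
      simp only [innerH, outerH, Finset.mem_filter, Finset.mem_univ, true_and] at hx hu
      simp only [switchH, Equiv.trans_apply]
      rw [Equiv.swap_apply_of_ne_of_ne (hM.2 x).symm, Equiv.swap_apply_left]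
      rintro rfl; exact hu.1 hx.1
    rintro ⟨M, x, u⟩ hp ⟨M', x', u'⟩ hp' he
    simp only [Finset.coe_sigma, Set.mem_sigma_iff, Finset.mem_coe, Finset.mem_product,
      pairJ, Finset.mem_filter, Finset.mem_univ, true_and] at hp hp'
    simp only [Sigma.mk.injEq, heq_eq_eq, Prod.mk.injEq] at he
    obtain ⟨h1, h2, h3⟩ := he
    subst h2
    have hu : u = u' := by
      rw [← key M x u hp.1.1 hp.2.1 hp.2.2, ← key M' x u' hp'.1.1 hp'.2.1 hp'.2.2, h1]
    subst hu
    have hM : M = M' := by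
      rw [← switch_switch M (M x) u, h1, h3, switch_switch]
    subst hM
    rfl

lemma pairJ_step (A : Finset H) (j : ℕ) (hj : 1 ≤ j)
    (h2 : 2 * (j + 1) ≤ A.card) (h3 : A.card ^ 2 ≤ 2 * j * Fintype.card H) :
    (pairJ A (j+1)).card ≤ (pairJ A j).card := by
  by_contra hcon
  push Not at hcon
  have hne : (pairJ A (j+1)).Nonempty := Finset.card_pos.1 (by omega)
  have h := switch_count A j
  rw [Finset.card_sigma, Finset.card_sigma] at h
  obtain ⟨c, hc⟩ : ∃ c, A.card = 2 * j + c := ⟨A.card - 2 * j, by omega⟩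
  obtain ⟨M₀, hM₀⟩ := hne
  have ho : ∀ M ∈ pairJ A (j+1), (outerH A M).card + (2 * j + c) + c = Fintype.card H + 2 := by
    intro M hM
    simp only [pairJ, Finset.mem_filter, Finset.mem_univ, true_and] at hM
    have e1 := inner_add_cross A M
    have e2 := cross_add_outer A M hM.1
    omega
  have hq : ∀ M ∈ pairJ A (j+1), (innerH A M ×ˢ outerH A M).card
      = (2 * (j + 1)) * (outerH A M₀).card := by
    intro M hM
    have e1 := ho M hM
    have e2 := ho M₀ hM₀
    rw [Finset.card_product]
    simp only [pairJ, Finset.mem_filter, Finset.mem_univ, true_and] at hM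
    rw [hM.2]
    congr 1
    omega
  have hp : ∀ M ∈ pairJ A j, ((crossH A M).offDiag).card = c * c - c := by
    intro M hM
    rw [Finset.offDiag_card]
    simp only [pairJ, Finset.mem_filter, Finset.mem_univ, true_and] at hM
    have e1 := inner_add_cross A M
    have : (crossH A M).card = c := by omega
    rw [this]
  rw [Finset.sum_congr rfl hq, Finset.sum_congr rfl hp, Finset.sum_const, Finset.sum_const,
    smul_eq_mul, smul_eq_mul] at h
  have e0 := ho M₀ hM₀
  set o := (outerH A M₀).card
  set N := Fintype.card H
  rw [hc] at h3 h2
  have hineq : c * c < (2 * (j + 1)) * o := by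
    zify at *
    have : (N : ℤ) = o + 2 * j + 2 * c - 2 := by linarith
    rw [this] at h3
    nlinarith
  have h5 : (pairJ A j).card * (c * c - c) ≤ (pairJ A j).card * ((2 * (j + 1)) * o) :=
    Nat.mul_le_mul_left _ (by omega)
  have h6 : (pairJ A j).card * ((2 * (j + 1)) * o) < (pairJ A (j+1)).card * ((2 * (j + 1)) * o) :=
    Nat.mul_lt_mul_of_pos_right hcon (by omega)
  omega

lemma pairJ_le (A : Finset H) (j₀ j : ℕ) (hj₀ : 1 ≤ j₀) (hj : j₀ ≤ j)
    (h3 : A.card ^ 2 ≤ 2 * j₀ * Fintype.card H) (h2 : 2 * j ≤ A.card) :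
    (pairJ A j).card ≤ (pairJ A j₀).card := by
  induction j, hj using Nat.le_induction with
  | base => exact le_rfl
  | succ j hj ih =>
    refine (pairJ_step A j (by omega) h2 (h3.trans ?_)).trans (ih (by omega))
    gcongr

end helpers

lemma sum_Zcount (n d i j : ℕ) :
    ∑ M ∈ pairings n d, Zcount n d i j M =
      ∑ S ∈ Finset.univ.filter (fun S : Finset (Fin n) => S.card = i),
        (pairJ (S ×ˢ (Finset.univ : Finset (Fin d))) j).card := by
  have h := Finset.sum_card_bipartiteAbove_eq_sum_card_bipartiteBelow
    (s := pairings n d) (t := Finset.univ.filter (fun S : Finset (Fin n) => S.card = i))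
    (fun M S => edgesWithin M S = j)
  have h1 : ∀ M ∈ pairings n d, Zcount n d i j M = (Finset.bipartiteAbove
      (fun M S => edgesWithin M S = j)
      (Finset.univ.filter (fun S : Finset (Fin n) => S.card = i)) M).card := by
    intro M _
    rw [Zcount, Finset.bipartiteAbove, Finset.filter_filter]
  rw [Finset.sum_congr rfl h1, h]
  refine Finset.sum_congr rfl fun S _ => ?_
  congr 1
  ext M
  simp only [Finset.bipartiteBelow, pairings, pairJ, Finset.mem_filter, Finset.mem_univ, true_and]
  refine and_congr_right fun hM => ?_
  have he := inner_even (S ×ˢ (Finset.univ : Finset (Fin d))) M hM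
  have hI : innerH (S ×ˢ (Finset.univ : Finset (Fin d))) M =
      Finset.univ.filter fun h : Fin n × Fin d => h.1 ∈ S ∧ (M h).1 ∈ S := by
    ext x; simp [innerH]
  rw [edgesWithin, ← hI]
  obtain ⟨m, hm⟩ := he
  omega

/-- Lemma: if `1 ≤ k ≤ d/2` and `1 ≤ i ≤ (2k/d) n` with `k·i` an integer, then for all
integers `j` with `k·i ≤ j ≤ (d/2)·i` one has `E[Z_{i,j}] ≤ E[Z_{i,ki}]`. -/
theorem EZ_max_at_ki (n d : ℕ) (heven : Even (n * d)) (k : ℝ)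
    (hk1 : 1 ≤ k) (hk2 : 2 * k ≤ d)
    (i : ℕ) (hi1 : 1 ≤ i) (hi2 : (i : ℝ) ≤ 2 * k / d * n)
    (ki : ℕ) (hki : (ki : ℝ) = k * i)
    (j : ℕ) (hj1 : ki ≤ j) (hj2 : 2 * j ≤ d * i) :
    EZ n d i j ≤ EZ n d i ki := by
  have hd : (0 : ℝ) < d := by linarith
  have hi : (1 : ℝ) ≤ i := by exact_mod_cast hi1
  have hki1 : 1 ≤ ki := by
    have : (1 : ℝ) ≤ ki := by rw [hki]; nlinarith
    exact_mod_cast this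
  have hmain : (d * i) ^ 2 ≤ 2 * ki * (n * d) := by
    have h1 : (i : ℝ) * d ≤ 2 * k * n := by
      have := mul_le_mul_of_nonneg_right hi2 hd.le
      have e : 2 * k / d * n * d = 2 * k * n := by field_simp
      linarith
    have h2 : ((d * i : ℝ)) ^ 2 ≤ 2 * ki * (n * d) := by
      rw [hki]
      have := mul_le_mul_of_nonneg_left h1 (by positivity : (0 : ℝ) ≤ d * i)
      nlinarith
    exact_mod_cast h2
  unfold EZ
  refine div_le_div_of_nonneg_right ?_ (Nat.cast_nonneg _)
  rw [← Nat.cast_sum, ← Nat.cast_sum, sum_Zcount, sum_Zcount]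
  norm_cast
  refine Finset.sum_le_sum fun S hS => ?_
  have hS' : S.card = i := by simpa using hS
  have hcard : (S ×ˢ (Finset.univ : Finset (Fin d))).card = d * i := by
    rw [Finset.card_product, hS', Finset.card_univ, Fintype.card_fin, mul_comm]
  refine pairJ_le _ ki j hki1 hj1 ?_ ?_
  · rw [hcard, Fintype.card_prod, Fintype.card_fin, Fintype.card_fin]
    exact hmain
  · rw [hcard]; exact hj2

end
end

section
/- Fix reals d and k with 2 ≤ k ≤ (1 − 1/√2)·d, and set C_{k,d} = e^{−4} (2k/d)^{1 + 1/(k−1)}. Then the function α ↦ (d/2)·[ h((2k/d)·α) + 2 h(α − (2k/d)·α) + h(1 − 2α + (2k/d)·α) ] − (d − 1)·[ h(α) + h(1 − α) ] is decreasing on the interval 0 ≤ α ≤ C_{k,d}. -/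
/-!
Monotonicity of the entropy functional on `[0, C_{k,d}]`.
-/

noncomputable section

/-- `h(x) = -x log x`, with `h(0) = 0` (automatic since `Real.log 0 = 0`). -/
def h (x : ℝ) : ℝ := -(x * Real.log x)

theorem h_hasDerivAt {x : ℝ} (hx : 0 < x) : HasDerivAt h (-(Real.log x + 1)) x :=
  (Real.hasDerivAt_mul_log hx.ne').neg

theorem h_continuous : Continuous h := Real.continuous_mul_log.neg

theorem main_ineq (d k p a : ℝ) (hk : 2 ≤ k) (hd : 0 < d) (hp : 0 < p) (hdp : d * p = 2 * k)
    (hp1 : p < 1) (hp2 : 2 ≤ (2 - p) ^ 2) (ha : 0 < a) (hac : (2 - p) * a < 1)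
    (hla : (k - 1) * Real.log a ≤ -4 * (k - 1) + k * Real.log p) :
    d / 2 * (p * -(Real.log (p * a) + 1) + 2 * ((1 - p) * -(Real.log ((1 - p) * a) + 1))
      + (p - 2) * -(Real.log (1 - (2 - p) * a) + 1))
      - (d - 1) * (-(Real.log a + 1) + (Real.log (1 - a) + 1)) ≤ 0 := by
  have hq : 0 < 1 - p := by linarith
  have ha1 : 0 < 1 - a := by nlinarith
  rw [Real.log_mul hp.ne' ha.ne', Real.log_mul hq.ne' ha.ne']
  have h1 : Real.log (1 - (2 - p) * a) ≤ (2 - p) * Real.log (1 - a) := by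
    rw [← Real.log_rpow ha1]
    apply Real.log_le_log (by linarith)
    have := one_add_mul_self_le_rpow_one_add (s := -a) (by linarith) (p := 2 - p) (by linarith)
    rw [← sub_eq_add_neg] at this
    linarith
  have h2 : Real.log (1 - a) ≤ 0 := Real.log_nonpos ha1.le (by linarith)
  have h3 : -((1 - p) * Real.log (1 - p)) ≤ p := by
    have := Real.one_sub_inv_le_log_of_pos hq
    have h5 := mul_le_mul_of_nonneg_left this hq.le
    rw [mul_sub, mul_inv_cancel₀ hq.ne'] at h5
    linarith
  have h4 : d * -((1 - p) * Real.log (1 - p)) ≤ d * p := mul_le_mul_of_nonneg_left h3 hd.le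
  have h6 : d / 2 * (2 - p) * Real.log (1 - (2 - p) * a)
      ≤ d / 2 * (2 - p) * ((2 - p) * Real.log (1 - a)) :=
    mul_le_mul_of_nonneg_left h1 (mul_nonneg (by linarith) (by linarith))
  have h7 : (d / 2 * (2 - p) ^ 2 - (d - 1)) * Real.log (1 - a) ≤ 0 := by
    apply mul_nonpos_of_nonneg_of_nonpos _ h2
    nlinarith
  have e : d / 2 * (p * -(Real.log p + Real.log a + 1)
      + 2 * ((1 - p) * -(Real.log (1 - p) + Real.log a + 1))
      + (p - 2) * -(Real.log (1 - (2 - p) * a) + 1))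
      - (d - 1) * (-(Real.log a + 1) + (Real.log (1 - a) + 1))
      = (d * p / 2 - 1) * Real.log a - d * p / 2 * Real.log p
        + d * -((1 - p) * Real.log (1 - p))
        + d / 2 * (2 - p) * Real.log (1 - (2 - p) * a) - (d - 1) * Real.log (1 - a) := by ring
  rw [e, hdp]
  rw [hdp] at h4
  have e2 : (2 * k / 2 - 1) * Real.log a - 2 * k / 2 * Real.log p
     = (k - 1) * Real.log a - k * Real.log p := by ring
  rw [e2]
  linarith

/-- For reals `2 ≤ k ≤ (1 - 1/√2) d` and `C_{k,d} = e^{-4}(2k/d)^{1+1/(k-1)}`, the function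
`α ↦ (d/2)[h((2k/d)α) + 2h(α - (2k/d)α) + h(1 - 2α + (2k/d)α)] - (d-1)[h(α) + h(1-α)]`
is decreasing on the interval `[0, C_{k,d}]`. -/
theorem entropy_term_decreasing (d k : ℝ) (hk : 2 ≤ k)
    (hkd : k ≤ (1 - 1 / Real.sqrt 2) * d) :
    AntitoneOn
      (fun α : ℝ =>
        d / 2 * (h (2 * k / d * α) + 2 * h (α - 2 * k / d * α)
            + h (1 - 2 * α + 2 * k / d * α))
          - (d - 1) * (h α + h (1 - α)))
      (Set.Icc 0 (Real.exp (-4) * (2 * k / d) ^ (1 + 1 / (k - 1)))) := by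
  have hs : 0 < 1 / Real.sqrt 2 := by positivity
  have hs2 : (1 / Real.sqrt 2) ^ 2 = 1 / 2 := by
    rw [div_pow, Real.sq_sqrt (by norm_num)]; norm_num
  set s := 1 / Real.sqrt 2 with hsdef
  have hs3 : 1 / 2 < s := by nlinarith
  have hs1 : s < 1 := by nlinarith
  have hd : 0 < d := by
    by_contra hc
    push Not at hc
    nlinarith
  have hdp : d * (2 * k / d) = 2 * k := by field_simp
  have hp : 0 < 2 * k / d := by positivity
  have hps : 2 * k / d ≤ 2 * (1 - s) := by
    rw [div_le_iff₀ hd]; linarith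
  generalize 2 * k / d = p at *
  have hp1 : p < 1 := by linarith
  have hp2 : 2 ≤ (2 - p) ^ 2 := by nlinarith
  have hk1 : 0 < k - 1 := by linarith
  have hC : Real.exp (-4) * p ^ (1 + 1 / (k - 1)) ≤ 1 / 2 := by
    have h1 : p ^ (1 + 1 / (k - 1)) ≤ 1 := Real.rpow_le_one hp.le hp1.le (by positivity)
    have h2 : Real.exp (-4) ≤ 1 / 2 := by
      rw [Real.exp_neg, one_div]
      apply inv_anti₀ (by norm_num)
      linarith [Real.add_one_le_exp (4 : ℝ)]
    have h3 := Real.exp_pos (-4)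
    have h4 : 0 < p ^ (1 + 1 / (k - 1)) := Real.rpow_pos_of_pos hp _
    nlinarith
  have hder : ∀ a ∈ Set.Ioo 0 (Real.exp (-4) * p ^ (1 + 1 / (k - 1))), HasDerivAt (fun α : ℝ =>
        d / 2 * (h (p * α) + 2 * h (α - p * α)
            + h (1 - 2 * α + p * α))
          - (d - 1) * (h α + h (1 - α)))
      (d / 2 * (p * -(Real.log (p * a) + 1) + 2 * ((1 - p) * -(Real.log ((1 - p) * a) + 1))
      + (p - 2) * -(Real.log (1 - (2 - p) * a) + 1))
      - (d - 1) * (-(Real.log a + 1) + (Real.log (1 - a) + 1))) a := by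
    rintro a ⟨ha0, haC⟩
    have ha2 : a < 1 / 2 := by linarith
    have i := hasDerivAt_id' a
    have e1 : a - p * a = (1 - p) * a := by ring
    have e2 : 1 - 2 * a + p * a = 1 - (2 - p) * a := by ring
    have d1 := (h_hasDerivAt (x := p * a) (by positivity)).comp a (i.const_mul p)
    have d2 := (h_hasDerivAt (x := a - p * a) (by nlinarith)).comp a (i.sub (i.const_mul p))
    have d3 := (h_hasDerivAt (x := 1 - 2 * a + p * a) (by nlinarith)).comp a
      (((i.const_mul 2).const_sub 1).add (i.const_mul p))
    have d4 := h_hasDerivAt ha0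
    have d5 := (h_hasDerivAt (x := 1 - a) (by linarith)).comp a (i.const_sub 1)
    have D := (((d1.add (d2.const_mul 2)).add d3).const_mul (d / 2)).sub
      ((d4.add d5).const_mul (d - 1))
    rw [e1, e2] at D
    refine D.congr_deriv ?_
    ring
  apply antitoneOn_of_deriv_nonpos (convex_Icc _ _)
  · have := h_continuous
    apply Continuous.continuousOn
    fun_prop
  · rw [interior_Icc]
    exact fun a ha => (hder a ha).differentiableAt.differentiableWithinAt
  · rw [interior_Icc]
    intro a ha
    rw [(hder a ha).deriv]
    obtain ⟨ha0, haC⟩ := ha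
    apply main_ineq d k p a hk hd hp hdp hp1 hp2 ha0 (by nlinarith)
    have hl := Real.log_le_log ha0 haC.le
    rw [Real.log_mul (Real.exp_pos _).ne' (Real.rpow_pos_of_pos hp _).ne', Real.log_exp,
      Real.log_rpow hp] at hl
    have h5 := mul_le_mul_of_nonneg_left hl hk1.le
    have e : (k - 1) * (-4 + (1 + 1 / (k - 1)) * Real.log p)
        = -4 * (k - 1) + k * Real.log p := by
      field_simp
      ring
    linarith

end
end

section
/- Fix reals d and k with 2 ≤ k ≤ (1 − 1/√2)·d. Then for all 0 ≤ α ≤ 1, (d/2)·[ h((2k/d)·α) + 2 h(α − (2k/d)·α) + h(1 − 2α + (2k/d)·α) ] − (d − 1)·[ h(α) + h(1 − α) ] ≤ α·(k log d + 1) + h(α)·(1 − k) + (d/2)·α³. -/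
/-!
Upper bound for the entropy functional.
-/

noncomputable section

lemma h_mul (x y : ℝ) : h (x * y) = y * h x + x * h y := by
  unfold h
  rcases eq_or_ne x 0 with rfl | hx
  · simp
  rcases eq_or_ne y 0 with rfl | hy
  · simp
  rw [Real.log_mul hx hy]; ring

lemma h_one_sub_le (x : ℝ) (hx : x ≤ 1) : h (1 - x) ≤ x := by
  unfold h
  rcases eq_or_lt_of_le hx with rfl | hx
  · simp
  have hp : 0 < 1 - x := by linarith
  have h1 := Real.one_sub_inv_le_log_of_pos hp
  have h2 := mul_le_mul_of_nonneg_left h1 hp.le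
  have h3 : (1 - x) * (1 - (1 - x)⁻¹) = -x := by field_simp; ring
  linarith

lemma h_one_sub_le_sq (x : ℝ) (hx0 : 0 ≤ x) (hx : x ≤ 2) : h (1 - x) ≤ x - x ^ 2 / 2 := by
  rcases lt_or_ge x 1 with hx1 | hx1
  · have hp : 0 < 1 - x := by linarith
    have hl : 0 ≤ -Real.log (1 - x) := by
      have := Real.log_nonpos hp.le (by linarith)
      linarith
    have h1 := Real.self_le_sinh_iff.2 hl
    rw [Real.sinh_eq, neg_neg, Real.exp_neg, Real.exp_log hp] at h1
    have h2 := mul_le_mul_of_nonneg_left h1 hp.le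
    have h3 : (1 - x) * (((1 - x)⁻¹ - (1 - x)) / 2) = x - x ^ 2 / 2 := by field_simp; ring
    unfold h
    linarith
  · have h1 : Real.log (x - 1) ≤ 0 := Real.log_nonpos (by linarith) (by linarith)
    have h2 : Real.log (1 - x) = Real.log (x - 1) := by
      rw [← Real.log_neg_eq_log]; congr 1; ring
    unfold h
    rw [h2]
    nlinarith

lemma le_h_one_sub (x : ℝ) (hx0 : 0 ≤ x) (hx : x ≤ 1) :
    2 * x - x ^ 2 - x ^ 3 ≤ 2 * h (1 - x) := by
  rcases eq_or_lt_of_le hx with rfl | hx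
  · simp [h]; norm_num
  have hp : 0 < 1 - x := by linarith
  have hs := Real.hasSum_pow_div_log_of_abs_lt_one (x := x) (by rw [abs_of_nonneg hx0]; exact hx)
  have h1 := sum_le_hasSum (Finset.range 2) (fun i _ => by positivity) hs
  norm_num [Finset.sum_range_succ] at h1
  have h2 := mul_le_mul_of_nonneg_left h1 hp.le
  unfold h
  nlinarith

/-- For reals `2 ≤ k ≤ (1 - 1/√2) d` and `0 ≤ α ≤ 1`,
`(d/2)[h((2k/d)α) + 2h(α - (2k/d)α) + h(1 - 2α + (2k/d)α)] - (d-1)[h(α) + h(1-α)]`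
is at most `α(k log d + 1) + h(α)(1 - k) + (d/2)α³`. -/
theorem entropy_term_upper_bound (d k : ℝ) (hk : 2 ≤ k)
    (hkd : k ≤ (1 - 1 / Real.sqrt 2) * d) (α : ℝ) (hα0 : 0 ≤ α) (hα1 : α ≤ 1) :
    d / 2 * (h (2 * k / d * α) + 2 * h (α - 2 * k / d * α)
        + h (1 - 2 * α + 2 * k / d * α))
      - (d - 1) * (h α + h (1 - α))
      ≤ α * (k * Real.log d + 1) + h α * (1 - k) + d / 2 * α ^ 3 := by
  have hs2 : 0 < Real.sqrt 2 := by positivity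
  have hsq : Real.sqrt 2 ^ 2 = 2 := Real.sq_sqrt (by norm_num)
  have hinv : 1 / Real.sqrt 2 = Real.sqrt 2 / 2 := by
    field_simp; linarith
  rw [hinv] at hkd
  have hs1 : 1 ≤ Real.sqrt 2 := by nlinarith
  have hs3 : Real.sqrt 2 < 2 := by nlinarith
  have hd : 0 < d := by
    by_contra hc
    nlinarith
  obtain ⟨b, hb⟩ : ∃ b, b = 2 * k / d := ⟨_, rfl⟩
  have hbd : d * b = 2 * k := by rw [hb]; field_simp
  rw [← hb]
  have hb0 : 0 < b := by rw [hb]; positivity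
  have hb1 : b ≤ 2 - Real.sqrt 2 := by
    rw [hb, div_le_iff₀ hd]; linarith
  have e1 : h (b * α) = α * h b + b * h α := h_mul b α
  have e2 : h (α - b * α) = α * h (1 - b) + (1 - b) * h α := by
    rw [← h_mul]; congr 1; ring
  have e3 : 1 - 2 * α + b * α = 1 - (2 - b) * α := by ring
  have e4 : d * h b = 2 * k * (Real.log d - Real.log (2 * k)) := by
    unfold h
    rw [show d * -(b * Real.log b) = - (d * b) * Real.log b by ring, hbd, hb,
      Real.log_div (by positivity) (by positivity)]
    ring
  have hlog : 1 ≤ Real.log (2 * k) := by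
    rw [Real.le_log_iff_exp_le (by positivity)]
    linarith [Real.exp_one_lt_d9]
  have i1 := h_one_sub_le α hα1
  have i2 := h_one_sub_le b (by linarith)
  have i3 := h_one_sub_le_sq ((2 - b) * α) (mul_nonneg (by linarith) hα0) (by nlinarith)
  have i4 := le_h_one_sub α hα0 hα1
  have i5 : 2 * α ^ 2 ≤ ((2 - b) * α) ^ 2 := by
    rw [mul_pow]
    apply mul_le_mul_of_nonneg_right _ (sq_nonneg α)
    nlinarith
  have i6 : h (1 - (2 - b) * α) - 2 * h (1 - α) ≤ α ^ 3 - b * α := by linarith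
  have i7 := mul_le_mul_of_nonneg_left i6 (by positivity : 0 ≤ d / 2)
  have i8 := mul_le_mul_of_nonneg_left i2 (by positivity : 0 ≤ d * α)
  have i9 := mul_le_mul_of_nonneg_left hlog (by positivity : 0 ≤ k * α)
  have hk' : k = d * b / 2 := by linarith
  rw [e1, e2, e3]
  have e5 : d / 2 * (α * h b + b * h α + 2 * (α * h (1 - b) + (1 - b) * h α)
        + h (1 - (2 - b) * α)) - (d - 1) * (h α + h (1 - α))
      = α / 2 * (d * h b) + (1 - d * b / 2) * h α + d * α * h (1 - b)
        + d / 2 * (h (1 - (2 - b) * α) - 2 * h (1 - α)) + h (1 - α) := by ring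
  rw [e5, e4, hbd]
  have e6 : d * α * b = 2 * k * α := by rw [← hbd]; ring
  have e7 : d / 2 * (α ^ 3 - b * α) = d / 2 * α ^ 3 - k * α := by rw [hk']; ring
  rw [e6] at i8
  rw [e7] at i7
  linarith

end
end

section
/- Let G_{n,d} be the configuration-model random d-regular multigraph on n vertices, fix reals k ≥ 1 and α with 2k/d < α < 1, and let Z_j denote the number of vertex subsets S with |S| = αn inducing exactly j edges. Then for all sufficiently large n (with αn and kαn integers), the expectation E[Z_j] is maximized over 0 ≤ j ≤ kαn at j = kαn; that is, E[Z_j] ≤ E[Z_{kαn}] for all integers 0 ≤ j ≤ kαn. -/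
/-!
The configuration model; for `α > 2k/d` and sufficiently large `n`, the expectation
`E[Z_j]` of the number of subsets of size `αn` inducing exactly `j` edges is maximized
over `0 ≤ j ≤ kαn` at `j = kαn`.
-/

open scoped Classical

noncomputable section

section Helpers

variable {X : Type} [Fintype X] [DecidableEq X] (p : X → Prop)

def PairsOf (X : Type) [Fintype X] [DecidableEq X] : Finset (X ≃ X) :=
  Finset.univ.filter fun M => (∀ x, M (M x) = x) ∧ ∀ x, M x ≠ x

def inn (M : X ≃ X) : Finset X := Finset.univ.filter fun h => p h ∧ p (M h)
def crs (M : X ≃ X) : Finset X := Finset.univ.filter fun h => p h ∧ ¬ p (M h)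
def outr (M : X ≃ X) : Finset X := Finset.univ.filter fun h => ¬ p h ∧ ¬ p (M h)

def PJ (j : ℕ) : Finset (X ≃ X) := (PairsOf X).filter fun M => (inn p M).card / 2 = j

lemma inn_even {M : X ≃ X} (hM : M ∈ PairsOf X) : Even (inn p M).card := by
  simp only [PairsOf, Finset.mem_filter, Finset.mem_univ, true_and] at hM
  have h : ∑ x ∈ inn p M, (1 : ZMod 2) = 0 := by
    refine Finset.sum_involution (fun x _ => M x) ?_ ?_ ?_ ?_
    · intro a ha; decide
    · intro a ha _; exact hM.2 a
    · intro a ha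
      simp only [inn, Finset.mem_filter, Finset.mem_univ, true_and] at ha ⊢
      rw [hM.1]; exact ⟨ha.2, ha.1⟩
    · intro a ha; exact hM.1 a
  rw [Finset.sum_const, nsmul_eq_mul, mul_one] at h
  rw [ZMod.natCast_eq_zero_iff] at h
  exact even_iff_two_dvd.mpr h

lemma inn_card {M : X ≃ X} {j : ℕ} (hM : M ∈ PJ p j) : (inn p M).card = 2 * j := by
  simp only [PJ, Finset.mem_filter] at hM
  obtain ⟨r, hr⟩ := inn_even p hM.1
  omega

lemma crs_card (M : X ≃ X) :
    (inn p M).card + (crs p M).card = (Finset.univ.filter fun h => p h).card := by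
  have := Finset.card_filter_add_card_filter_not (s := Finset.univ.filter fun h => p h) (fun h => p (M h))
  rw [Finset.filter_filter, Finset.filter_filter] at this
  exact this

lemma outr_card {M : X ≃ X} (hM : M ∈ PairsOf X) :
    (outr p M).card + (crs p M).card + (Finset.univ.filter fun h => p h).card
      = Fintype.card X := by
  have h1 : (Finset.univ.filter fun h => p h).card + (Finset.univ.filter fun h => ¬ p h).card
      = (Finset.univ : Finset X).card := by
    convert Finset.card_filter_add_card_filter_not (s := (Finset.univ : Finset X)) p
  have h2 : (Finset.univ.filter fun h => ¬ p h ∧ p (M h)).card + (outr p M).card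
      = (Finset.univ.filter fun h => ¬ p h).card := by
    have h2 := Finset.card_filter_add_card_filter_not
      (s := Finset.univ.filter fun h => ¬ p h) (fun h => p (M h))
    rw [Finset.filter_filter, Finset.filter_filter] at h2
    convert h2
    ext z; simp [outr]
  have h3 : (crs p M).card = (Finset.univ.filter fun h => ¬ p h ∧ p (M h)).card := by
    simp only [PairsOf, Finset.mem_filter, Finset.mem_univ, true_and] at hM
    refine Finset.card_bij (fun x _ => M x) ?_ ?_ ?_
    · intro a ha
      simp only [crs, Finset.mem_filter, Finset.mem_univ, true_and] at ha ⊢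
      rw [hM.1]; exact ⟨ha.2, ha.1⟩
    · intro a _ b _ h; exact M.injective h
    · intro b hb
      refine ⟨M b, ?_, hM.1 b⟩
      simp only [crs, Finset.mem_filter, Finset.mem_univ, true_and] at hb ⊢
      rw [hM.1]; exact ⟨hb.2, hb.1⟩
  rw [Finset.card_univ] at h1
  omega

/-- Conjugation by the transposition of `x` and `y`. -/
def cj (M : X ≃ X) (x y : X) : X ≃ X :=
  ((Equiv.swap x y).trans M).trans (Equiv.swap x y)

lemma cj_apply (M : X ≃ X) (x y z : X) :
    cj M x y z = Equiv.swap x y (M (Equiv.swap x y z)) := rfl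

lemma cj_cj (M : X ≃ X) (x y : X) : cj (cj M x y) x y = M := by
  ext z; simp [cj_apply]

lemma cj_mem {M : X ≃ X} (hM : M ∈ PairsOf X) (x y : X) : cj M x y ∈ PairsOf X := by
  simp only [PairsOf, Finset.mem_filter, Finset.mem_univ, true_and] at hM ⊢
  refine ⟨fun z => ?_, fun z hz => ?_⟩
  · simp [cj_apply, hM.1]
  · rw [cj_apply, Equiv.swap_apply_eq_iff] at hz
    exact hM.2 _ hz

lemma cj_facts {M : X ≃ X} (hM : M ∈ PairsOf X) {a a' : X} (ha : a ∈ crs p M)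
    (ha' : a' ∈ crs p M) (hne : a ≠ a') :
    cj M a' (M a) a = a' ∧ cj M a' (M a) (M a) = M a' ∧
      inn p (cj M a' (M a)) = insert a (insert a' (inn p M)) := by
  simp only [PairsOf, Finset.mem_filter, Finset.mem_univ, true_and] at hM
  simp only [crs, Finset.mem_filter, Finset.mem_univ, true_and] at ha ha'
  have e1 : a ≠ M a := fun h => hM.2 a h.symm
  have e2 : M a' ≠ a' := hM.2 a'
  have e3 : M a' ≠ M a := fun h => hne (M.injective h).symm
  have e4 : a' ≠ M a := fun h => ha.2 (h ▸ ha'.1)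
  have f1 : cj M a' (M a) a = a' := by
    rw [cj_apply, Equiv.swap_apply_of_ne_of_ne hne e1, Equiv.swap_apply_right]
  have f2 : cj M a' (M a) (M a) = M a' := by
    rw [cj_apply, Equiv.swap_apply_right, Equiv.swap_apply_of_ne_of_ne e2 e3]
  have f3 : cj M a' (M a) a' = a := by
    rw [cj_apply, Equiv.swap_apply_left, hM.1, Equiv.swap_apply_of_ne_of_ne hne e1]
  refine ⟨f1, f2, ?_⟩
  ext z
  simp only [inn, Finset.mem_filter, Finset.mem_univ, true_and, Finset.mem_insert]
  by_cases z1 : z = a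
  · subst z1; simp [f1, ha.1, ha'.1]
  by_cases z2 : z = a'
  · subst z2; simp [f3, ha.1, ha'.1]
  by_cases z3 : z = M a
  · subst z3; simp [ha.2, z1, z2]
  simp only [z1, z2, false_or]
  rw [cj_apply, Equiv.swap_apply_of_ne_of_ne z2 z3]
  by_cases z4 : M z = a'
  · have : z = M a' := by rw [← z4, hM.1]
    have hz : ¬ p z := by rw [this]; exact ha'.2
    simp [hz]
  · have z5 : M z ≠ M a := fun h => z1 (M.injective h)
    rw [Equiv.swap_apply_of_ne_of_ne z4 z5]

lemma step_le (j : ℕ) (D : ℕ) (hD : (Finset.univ.filter fun h => p h).card = D)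
    (h2 : 2 * (j + 1) ≤ D)
    (h3 : 2 * (j + 1) * Fintype.card X ≤ D * D) :
    (PJ p j).card ≤ (PJ p (j + 1)).card := by
  have key : ((PJ p j).sigma fun M => (crs p M).offDiag).card ≤
      ((PJ p (j + 1)).sigma fun M => (inn p M) ×ˢ (outr p M)).card := by
    refine Finset.card_le_card_of_injOn
      (fun t => (⟨cj t.1 t.2.2 (t.1 t.2.1), (t.2.1, t.1 t.2.1)⟩ : Σ _ : X ≃ X, X × X)) ?_ ?_
    · rintro ⟨M, a, a'⟩ ht
      simp only [Finset.coe_sigma, Set.mem_sigma_iff, Finset.mem_coe, Finset.mem_offDiag] at ht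
      obtain ⟨hM, ha, ha', hne⟩ := ht
      have hc := inn_card p hM
      simp only [PJ, Finset.mem_filter] at hM
      obtain ⟨f1, f2, f3⟩ := cj_facts p hM.1 ha ha' hne
      simp only [Finset.coe_sigma, Set.mem_sigma_iff, Finset.mem_coe, Finset.mem_product, PJ,
        Finset.mem_filter]
      simp only [crs, Finset.mem_filter, Finset.mem_univ, true_and] at ha ha'
      refine ⟨⟨cj_mem hM.1 _ _, ?_⟩, ?_, ?_⟩
      · rw [f3, Finset.card_insert_of_notMem, Finset.card_insert_of_notMem]
        · omega
        · simp [inn, ha'.2]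
        · simp [inn, ha.2, hne]
      · rw [f3]; simp
      · simp [outr, f2, ha.2, ha'.2]
    · rintro ⟨M, a, a'⟩ ht ⟨N, b, b'⟩ hs h
      simp only [Finset.coe_sigma, Set.mem_sigma_iff, Finset.mem_coe, Finset.mem_offDiag, PJ,
        Finset.mem_filter] at ht hs
      obtain ⟨hM, ha, ha', hne⟩ := ht
      obtain ⟨hN, hb, hb', hne'⟩ := hs
      obtain ⟨f1, -, -⟩ := cj_facts p hM.1 ha ha' hne
      obtain ⟨g1, -, -⟩ := cj_facts p hN.1 hb hb' hne'
      simp only [Sigma.mk.injEq, heq_eq_eq, Prod.mk.injEq] at h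
      obtain ⟨h1, rfl, h4⟩ := h
      have h5 : a' = b' := by rw [← f1, ← g1, h1]
      subst h5
      have h6 : M = N := by
        rw [← cj_cj M a' (M a), h1, h4, cj_cj]
      subst h6
      rfl
  rw [Finset.card_sigma, Finset.card_sigma] at key
  have kl : ∀ M ∈ PJ p j, (crs p M).offDiag.card = (D - 2 * j) * (D - 2 * j) - (D - 2 * j) := by
    intro M hM
    have h1 := crs_card p M
    rw [inn_card p hM, hD] at h1
    rw [Finset.offDiag_card, show (crs p M).card = D - 2 * j by omega]
  have kr : ∀ M ∈ PJ p (j + 1), ((inn p M) ×ˢ (outr p M)).card ≤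
      (D - 2 * j) * (D - 2 * j) - (D - 2 * j) := by
    intro M hM
    have h1 := crs_card p M
    have h4 := inn_card p hM
    simp only [PJ, Finset.mem_filter] at hM
    have h5 := outr_card p hM.1
    rw [hD] at h1 h5
    rw [Finset.card_product, h4]
    obtain ⟨q, rfl⟩ := Nat.exists_eq_add_of_le h2
    have e : 2 * (j + 1) + q - 2 * j = q + 2 := by omega
    rw [e]
    have e2 : (q + 2) * (q + 2) - (q + 2) = (q + 2) * (q + 1) := by
      rw [← Nat.mul_sub_one]; rfl
    rw [e2]
    have e3 : (crs p M).card = q := by omega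
    rw [e3] at h5
    rw [← h5] at h3
    nlinarith
  rw [Finset.sum_congr rfl kl] at key
  have key2 := key.trans (Finset.sum_le_sum kr)
  simp only [Finset.sum_const, smul_eq_mul] at key2
  refine Nat.le_of_mul_le_mul_right key2 ?_
  obtain ⟨q, rfl⟩ := Nat.exists_eq_add_of_le h2
  have e : 2 * (j + 1) + q - 2 * j = q + 2 := by omega
  rw [e, ← Nat.mul_sub_one]
  exact Nat.mul_pos (by omega) (by omega)

lemma mono_le (m D : ℕ) (hD : (Finset.univ.filter fun h => p h).card = D)
    (h2 : 2 * m ≤ D) (h3 : 2 * m * Fintype.card X ≤ D * D) (j : ℕ) (hj : j ≤ m) :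
    (PJ p j).card ≤ (PJ p m).card := by
  induction m, hj using Nat.le_induction with
  | base => exact le_rfl
  | succ m hm ih =>
    refine (ih (by omega) (le_trans ?_ h3)).trans (step_le p m D hD h2 h3)
    exact Nat.mul_le_mul_right _ (by omega)

end Helpers

lemma sum_Z (n d i j : ℕ) : ∑ M ∈ pairings n d, Zcount n d i j M =
    ∑ S : Finset (Fin n), if S.card = i then
      (PJ (X := Fin n × Fin d) (fun h => h.1 ∈ S) j).card else 0 := by
  simp only [Zcount, Finset.card_filter]
  rw [Finset.sum_comm]
  refine Finset.sum_congr rfl fun S _ => ?_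
  split_ifs with hS
  · rw [PJ, Finset.card_filter]
    refine Finset.sum_congr rfl fun M _ => ?_
    simp only [hS, true_and]
    unfold edgesWithin inn
    congr!
  · simp [hS]

lemma card_half (n d : ℕ) (S : Finset (Fin n)) :
    (Finset.univ.filter fun h : Fin n × Fin d => h.1 ∈ S).card = S.card * d := by
  have : (Finset.univ.filter fun h : Fin n × Fin d => h.1 ∈ S) = S ×ˢ Finset.univ := by
    ext; simp
  rw [this, Finset.card_product]; simp

/-- Lemma: fix `k ≥ 1` and `2k/d < α < 1`.  For all sufficiently large `n` (with `αn` and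
`kαn` integers), `E[Z_j] ≤ E[Z_{kαn}]` for all integers `0 ≤ j ≤ kαn`. -/
theorem EZ_max_at_kalphan (d : ℕ) (hd : 0 < d) (k α : ℝ) (hk : 1 ≤ k)
    (hα1 : 2 * k / d < α) (hα2 : α < 1) :
    ∃ N : ℕ, ∀ n : ℕ, N ≤ n → Even (n * d) →
      ∀ i m : ℕ, (i : ℝ) = α * n → (m : ℝ) = k * α * n →
        ∀ j : ℕ, j ≤ m → EZ n d i j ≤ EZ n d i m := by
  refine ⟨0, fun n _ _ i m hi hm j hj => ?_⟩
  have hdR : (0 : ℝ) < d := by exact_mod_cast hd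
  rw [div_lt_iff₀ hdR] at hα1
  have hα0 : 0 < α := by
    by_contra h
    nlinarith
  have hn : (0 : ℝ) ≤ n := Nat.cast_nonneg n
  have h2 : 2 * m ≤ i * d := by
    have : (2 * m : ℝ) ≤ i * d := by
      rw [hi, hm]
      have : 2 * k * α ≤ α * d := by nlinarith
      nlinarith
    exact_mod_cast this
  have h3 : 2 * m * (n * d) ≤ (i * d) * (i * d) := by
    have : (2 * m * (n * d) : ℝ) ≤ (i * d) * (i * d) := by
      rw [hi, hm]
      have : 0 ≤ (α * d - 2 * k) * (α * n * n * d) := by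
        apply mul_nonneg
        · linarith
        · positivity
      nlinarith
    exact_mod_cast this
  unfold EZ
  refine div_le_div_of_nonneg_right ?_ (Nat.cast_nonneg _)
  rw [← Nat.cast_sum, ← Nat.cast_sum, Nat.cast_le, sum_Z, sum_Z]
  refine Finset.sum_le_sum fun S _ => ?_
  split_ifs with hS
  · refine mono_le _ m (i * d) ?_ h2 (by simpa using h3) j hj
    rw [← hS, ← card_half n d S]
    congr!
  · exact le_rfl

end
end

section
/- For every real x with 0 < x ≤ 1/2, (1 − x)·log(1 − x) − (1/2)·(1 − 2x)·log(1 − 2x) < 0, where at x = 1/2 the second term is interpreted as 0 (convention 0·log 0 = 0). -/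
/-!
For `0 < x ≤ 1/2`, `(1-x) log(1-x) - (1/2)(1-2x) log(1-2x) < 0`.  At `x = 1/2` the second
term is `0 · log 0`, which is `0` (automatic since `Real.log 0 = 0`).
-/

theorem entropy_difference_neg (x : ℝ) (hx0 : 0 < x) (hx : x ≤ 1 / 2) :
    (1 - x) * Real.log (1 - x) - (1 / 2) * ((1 - 2 * x) * Real.log (1 - 2 * x)) < 0 := by
  have h := Real.strictConvexOn_mul_log.2 (x := 1) (y := 1 - 2 * x) (by simp)
    (by simp only [Set.mem_Ici]; linarith) (by intro h; linarith)
    (show (0 : ℝ) < 1 / 2 by norm_num) (show (0 : ℝ) < 1 / 2 by norm_num) (by norm_num)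
  simp only [smul_eq_mul, Real.log_one, mul_zero, zero_add] at h
  rw [show (1 / 2 : ℝ) * 1 + 1 / 2 * (1 - 2 * x) = 1 - x by ring] at h
  linarith
end

section
/- Fix reals d and k with k ≥ 2 and 2k ≤ d, and set C_{k,d} = e^{−4} (2k/d)^{1 + 1/(k−1)}. Then for every real α with 0 < α < C_{k,d}, (d/2)·( h(2k/d) + 2·h(1 − 2k/d) ) + (k − 1)·log α < 0. -/
/-!
Negativity of `(d/2)(h(2k/d) + 2h(1 - 2k/d)) + (k-1) log α` for `α` below
`C_{k,d} = e^{-4} (2k/d)^{1 + 1/(k-1)}`.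
-/

noncomputable section

/-- For reals `k ≥ 2` with `2k ≤ d` and `0 < α < C_{k,d} = e^{-4}(2k/d)^{1+1/(k-1)}`,
`(d/2)(h(2k/d) + 2 h(1 - 2k/d)) + (k - 1) log α < 0`. -/
theorem entropy_log_term_negative (d k : ℝ) (hk : 2 ≤ k) (hkd : 2 * k ≤ d)
    (α : ℝ) (hα0 : 0 < α)
    (hα : α < Real.exp (-4) * (2 * k / d) ^ (1 + 1 / (k - 1))) :
    d / 2 * (h (2 * k / d) + 2 * h (1 - 2 * k / d)) + (k - 1) * Real.log α < 0 := by
  have hd : 0 < d := by linarith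
  have hk1 : 0 < k - 1 := by linarith
  obtain ⟨x, hx⟩ : ∃ x, x = 2 * k / d := ⟨_, rfl⟩
  have hx0 : 0 < x := by rw [hx]; positivity
  have hx1 : x ≤ 1 := by rw [hx, div_le_one hd]; exact hkd
  have hdx : d / 2 * x = k := by rw [hx]; field_simp
  rw [← hx] at hα ⊢
  have hlog : Real.log α < -4 + (1 + 1 / (k - 1)) * Real.log x := by
    have h1 := Real.log_lt_log hα0 hα
    rwa [Real.log_mul (Real.exp_pos _).ne' (Real.rpow_pos_of_pos hx0 _).ne', Real.log_exp,
      Real.log_rpow hx0] at h1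
  have h2 : (k - 1) * Real.log α < -4 * (k - 1) + k * Real.log x := by
    have h3 := mul_lt_mul_of_pos_left hlog hk1
    have h4 : (k - 1) * (-4 + (1 + 1 / (k - 1)) * Real.log x)
        = -4 * (k - 1) + k * Real.log x := by
      field_simp
      ring
    linarith
  have h5 : h (1 - x) ≤ x := by
    unfold h
    rcases hx1.eq_or_lt with h6 | h6
    · subst h6; simp
    · have h7 : 0 < 1 - x := by linarith
      have h8 := Real.one_sub_inv_le_log_of_pos h7
      have h9 := mul_le_mul_of_nonneg_left h8 h7.le
      rw [mul_sub, mul_inv_cancel₀ h7.ne'] at h9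
      linarith
  have h10 : d / 2 * h (1 - x) ≤ k := by
    rw [← hdx]
    exact mul_le_mul_of_nonneg_left h5 (by positivity)
  have h11 : d / 2 * h x = -(k * Real.log x) := by
    rw [← hdx]; unfold h; ring
  have h12 : d / 2 * (h x + 2 * h (1 - x)) = d / 2 * h x + 2 * (d / 2 * h (1 - x)) := by ring
  rw [h12, h11]
  linarith

end
end
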